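/- arXiv:2205.07777 — 2 statements merged into one kernel-verified Lean document; each statement's English description precedes it below -/
import Mathlib

section
/- For every ε > 0 there exist a simple polygon W ⊆ ℝ² whose free space F is connected, and distinct points s₁, s₂ ∈ F and distinct points t₁, t₂ ∈ F with dist(s₁, s₂) ≥ 4 − ε and dist(t₁, t₂) ≥ 4 − ε, such that no valid motion plan exists for S = {s₁, s₂} and T = {t₁, t₂}. In other words, monochromatic separation strictly less than 4 does not always guarantee a solution, even when the free space is a single connected component containing two start and two target positions. -/
open Metric Set

noncomputable section

/-- The Euclidean plane ℝ². -/
abbrev Plane : Type := EuclideanSpace ℝ (Fin 2)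

/-- A simple polygon, given by a simple (injective) closed polygonal curve in the plane. -/
structure SimplePolygon where
  /-- the parametrization of the boundary curve over `[0,1]` -/
  toFun : ℝ → Plane
  continuous : Continuous toFun
  closed : toFun 0 = toFun 1
  injOn : Set.InjOn toFun (Set.Ico (0 : ℝ) 1)
  /-- the curve is polygonal: it is affine on each piece of some finite partition of `[0,1]` -/
  polygonal : ∃ (n : ℕ) (t : Fin (n + 1) → ℝ),
    t 0 = 0 ∧ t (Fin.last n) = 1 ∧ StrictMono t ∧
    ∀ i : Fin n, ∀ s ∈ Set.Icc (t i.castSucc) (t i.succ),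
      toFun s = toFun (t i.castSucc) +
        ((s - t i.castSucc) / (t i.succ - t i.castSucc)) •
          (toFun (t i.succ) - toFun (t i.castSucc))

/-- The boundary curve of a simple polygon, as a subset of the plane. -/
def SimplePolygon.bdryCurve (P : SimplePolygon) : Set Plane :=
  P.toFun '' Set.Icc 0 1

/-- The closed region bounded by a simple polygon: the union of the boundary curve with
the bounded connected components of its complement. -/
def SimplePolygon.region (P : SimplePolygon) : Set Plane :=
  P.bdryCurve ∪
    {x | x ∉ P.bdryCurve ∧ Bornology.IsBounded (connectedComponentIn P.bdryCurveᶜ x)}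

/-- The free space of a simple polygon: all positions whose open unit disc lies in the region. -/
def SimplePolygon.freeSpace (P : SimplePolygon) : Set Plane :=
  {x | Metric.ball x 1 ⊆ P.region}

/-- A valid (unlabeled) motion plan for `m` unit-disc robots inside the free space `F`,
from the set `S` of start positions to the set `T` of target positions: a family of
continuous paths in `F` starting at a bijective enumeration of `S`, whose endpoints cover
exactly `T`, such that at every moment any two robots are at distance at least `2`. -/
def IsValidMotionPlan (F : Set Plane) {m : ℕ} (S T : Set Plane)
    (π : Fin m → unitInterval → Plane) : Prop :=
  (∀ i, Continuous (π i)) ∧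
  (∀ i τ, π i τ ∈ F) ∧
  Set.BijOn (fun i => π i 0) Set.univ S ∧
  (Set.range fun i => π i 1) = T ∧
  ∀ (τ : unitInterval) (i j : Fin m), i ≠ j → 2 ≤ dist (π i τ) (π j τ)

/-!
The polygon is a chamber with an upward exit between two tips at `(±(1 + η), 0)`. Below each tip
the chamber has a side pocket; the two starting discs touch the tips from inside the pockets, and
their centers are nearly `4` apart. The floor is so close to a circular arc around the origin that
the center of every disc at height at most `0` is within `2 - η` of the origin. One of the targets
lies in the exit, at positive height, so in a motion plan there is a time at which the higher of the
two centers is at height exactly `0`. The tips force it to be within `η` of the origin, while the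
other center, at height at most `0`, is within `2 - η`: the discs overlap.
-/

/-! ### Piecewise affine functions of one variable -/

/-- A function of a real variable is piecewise affine if it is affine on every segment whose
interior avoids some finite set of breakpoints. Segments instead of intervals make the notion
manifestly invariant under affine reparametrization, in either direction. -/
def IsPiecewiseAffine {E : Type*} [AddCommGroup E] [Module ℝ E] (h : ℝ → E) : Prop :=
  ∃ B : Finset ℝ, ∀ u v : ℝ, Disjoint (B : Set ℝ) (openSegment ℝ u v) →
    ∃ A : ℝ →ᵃ[ℝ] E, EqOn h A (segment ℝ u v)

lemma exists_partition_avoiding (B : Finset ℝ) :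
    ∃ (n : ℕ) (t : Fin (n + 1) → ℝ), t 0 = 0 ∧ t (Fin.last n) = 1 ∧ StrictMono t ∧
      ∀ i : Fin n, Disjoint (B : Set ℝ) (Ioo (t i.castSucc) (t i.succ)) := by
  set C : Finset ℝ := insert 0 (insert 1 (B.filter (· ∈ Icc (0 : ℝ) 1))) with hC
  have hC01 : ∀ z ∈ C, z ∈ Icc (0 : ℝ) 1 := by
    simp only [hC, Finset.forall_mem_insert, Finset.mem_filter]
    exact ⟨by simp, by simp, fun z hz => hz.2⟩
  have h0 : (0 : ℝ) ∈ C := Finset.mem_insert_self _ _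
  have h1 : (1 : ℝ) ∈ C := Finset.mem_insert_of_mem (Finset.mem_insert_self _ _)
  obtain ⟨n, hn⟩ : ∃ n, C.card = n + 1 :=
    Nat.exists_eq_succ_of_ne_zero (Finset.card_ne_zero_of_mem h0)
  set t := C.orderEmbOfFin hn
  have ht01 : ∀ i, t i ∈ Icc (0 : ℝ) 1 := fun i => hC01 _ (C.orderEmbOfFin_mem hn i)
  have hrange : ∀ z ∈ C, z ∈ range t := fun z hz => by rwa [C.range_orderEmbOfFin hn]
  refine ⟨n, t, ?_, ?_, t.strictMono, fun i => Set.disjoint_left.2 fun z hz ⟨hlo, hhi⟩ => ?_⟩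
  · obtain ⟨i, hi⟩ := hrange 0 h0
    exact le_antisymm (hi ▸ t.monotone (Fin.zero_le i)) (ht01 0).1
  · obtain ⟨i, hi⟩ := hrange 1 h1
    exact le_antisymm (ht01 _).2 (hi ▸ t.monotone (Fin.le_last i))
  · have hzC : z ∈ C := Finset.mem_insert_of_mem <| Finset.mem_insert_of_mem <|
      Finset.mem_filter.2 ⟨hz, (ht01 _).1.trans hlo.le, hhi.le.trans (ht01 _).2⟩
    obtain ⟨j, rfl⟩ := hrange z hzC
    rw [t.lt_iff_lt] at hlo hhi
    exact hhi.not_ge (Fin.castSucc_lt_iff_succ_le.1 hlo)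

lemma segment_subset_Iic_or_subset_Ici {u v c : ℝ} (hc : c ∉ openSegment ℝ u v) :
    segment ℝ u v ⊆ Iic c ∨ segment ℝ u v ⊆ Ici c := by
  rcases le_or_gt u c with hu | hu <;> rcases le_or_gt v c with hv | hv
  · exact Or.inl ((convex_Iic c).segment_subset hu hv)
  · rcases hu.eq_or_lt with rfl | hu
    · exact Or.inr ((convex_Ici u).segment_subset self_mem_Ici hv.le)
    · exact absurd (openSegment_eq_Ioo (hu.trans hv) ▸ ⟨hu, hv⟩) hc
  · rcases hv.eq_or_lt with rfl | hv
    · exact Or.inr ((convex_Ici v).segment_subset hu.le self_mem_Ici)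
    · exact absurd (openSegment_symm ℝ u v ▸ openSegment_eq_Ioo (hv.trans hu) ▸ ⟨hv, hu⟩) hc
  · exact Or.inr ((convex_Ici c).segment_subset hu.le hv.le)

namespace IsPiecewiseAffine

section Module

variable {E : Type*} [AddCommGroup E] [Module ℝ E] {h h₁ h₂ : ℝ → E}

lemma comp_affineMap (hh : IsPiecewiseAffine h) {L : ℝ →ᵃ[ℝ] ℝ} (hL : Function.Injective L) :
    IsPiecewiseAffine (h ∘ L) := by
  obtain ⟨B, hB⟩ := hh
  refine ⟨B.preimage L hL.injOn, fun u v huv => ?_⟩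
  rw [Finset.coe_preimage, ← Set.disjoint_image_right, image_openSegment] at huv
  obtain ⟨A, hA⟩ := hB _ _ huv
  refine ⟨A.comp L, fun x hx => hA ?_⟩
  rw [← image_segment]
  exact mem_image_of_mem L hx

lemma ite (hh₁ : IsPiecewiseAffine h₁) (hh₂ : IsPiecewiseAffine h₂) {c : ℝ} (hc : h₁ c = h₂ c) :
    IsPiecewiseAffine fun x => if x ≤ c then h₁ x else h₂ x := by
  obtain ⟨B₁, hB₁⟩ := hh₁
  obtain ⟨B₂, hB₂⟩ := hh₂
  refine ⟨insert c (B₁ ∪ B₂), fun u v huv => ?_⟩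
  rw [Finset.coe_insert, Finset.coe_union, disjoint_insert_left, disjoint_union_left] at huv
  obtain ⟨hcuv, huv₁, huv₂⟩ := huv
  rcases segment_subset_Iic_or_subset_Ici hcuv with hle | hge
  · obtain ⟨A, hA⟩ := hB₁ u v huv₁
    exact ⟨A, fun x hx => (if_pos (hle hx)).trans (hA hx)⟩
  · obtain ⟨A, hA⟩ := hB₂ u v huv₂
    refine ⟨A, fun x hx => Eq.trans ?_ (hA hx)⟩
    rcases (mem_Ici.1 (hge hx)).eq_or_lt with rfl | hlt
    · exact (if_pos le_rfl).trans hc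
    · exact if_neg hlt.not_ge

lemma comp_abs (hh : IsPiecewiseAffine h) : IsPiecewiseAffine fun x => h |x| := by
  have hneg : IsPiecewiseAffine (h ∘ AffineMap.lineMap 0 (-1)) :=
    hh.comp_affineMap (AffineMap.lineMap_injective ℝ (by norm_num))
  convert hneg.ite hh (c := 0) (by simp) using 2 with x
  split_ifs with hx
  · simp [abs_of_nonpos hx, AffineMap.lineMap_apply]
  · rw [abs_of_pos (not_le.1 hx)]

lemma exists_partition (hh : IsPiecewiseAffine h) :
    ∃ (n : ℕ) (t : Fin (n + 1) → ℝ), t 0 = 0 ∧ t (Fin.last n) = 1 ∧ StrictMono t ∧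
      ∀ i : Fin n, ∀ s ∈ Icc (t i.castSucc) (t i.succ),
        h s = h (t i.castSucc) + ((s - t i.castSucc) / (t i.succ - t i.castSucc)) •
          (h (t i.succ) - h (t i.castSucc)) := by
  obtain ⟨B, hB⟩ := hh
  obtain ⟨n, t, ht0, ht1, ht, hBt⟩ := exists_partition_avoiding B
  refine ⟨n, t, ht0, ht1, ht, fun i s hs => ?_⟩
  have hlt : t i.castSucc < t i.succ := ht i.castSucc_lt_succ
  obtain ⟨A, hA⟩ := hB _ _ (openSegment_eq_Ioo hlt ▸ hBt i)
  rw [segment_eq_Icc hlt.le] at hA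
  rw [hA hs, hA (left_mem_Icc.2 hlt.le), hA (right_mem_Icc.2 hlt.le)]
  have hs' : s = AffineMap.lineMap (t i.castSucc) (t i.succ)
      ((s - t i.castSucc) / (t i.succ - t i.castSucc)) := by
    rw [AffineMap.lineMap_apply_ring', div_mul_cancel₀ _ (sub_pos.2 hlt).ne', sub_add_cancel]
  conv_lhs => rw [hs', A.apply_lineMap, AffineMap.lineMap_apply_module', add_comm]

end Module

/-- Between two consecutive crossing points of the lines, a line that is maximal at the midpoint is
maximal throughout. -/
lemma sup' {ι : Type*} (I : Finset ι) (hI : I.Nonempty) (m k : ι → ℝ) :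
    IsPiecewiseAffine fun x => I.sup' hI fun i => m i * x + k i := by
  refine ⟨(I ×ˢ I).image fun p => (k p.2 - k p.1) / (m p.1 - m p.2), fun u v huv => ?_⟩
  wlog huv' : u ≤ v generalizing u v
  · rw [segment_symm]
    exact this v u (openSegment_symm ℝ u v ▸ huv) (le_of_not_ge huv')
  obtain ⟨i, hi, hmax⟩ := Finset.exists_max_image I (fun i => m i * ((u + v) / 2) + k i) hI
  refine ⟨⟨fun x => m i * x + k i, LinearMap.mulLeft ℝ (m i), fun x y => by simp; ring⟩,
    fun x hx => le_antisymm (Finset.sup'_le hI _ fun j hj => ?_)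
      (Finset.le_sup' (fun i => m i * x + k i) hi)⟩
  change m j * x + k j ≤ m i * x + k i
  by_contra! hlt
  have hw := hmax j hj
  rw [segment_eq_Icc huv'] at hx
  obtain ⟨hux, hxv⟩ := hx
  have huv_lt : u < v := by
    refine huv'.lt_of_ne ?_
    rintro rfl
    obtain rfl := le_antisymm hux hxv
    ring_nf at hw hlt
    linarith
  rw [openSegment_eq_Ioo huv_lt, Set.disjoint_left] at huv
  refine huv (Finset.mem_coe.2 (Finset.mem_image_of_mem _ (Finset.mk_mem_product hi hj))) ?_
  rcases lt_trichotomy (m i - m j) 0 with hneg | hzero | hpos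
  · rw [mem_Ioo, lt_div_iff_of_neg hneg, div_lt_iff_of_neg hneg]
    constructor <;> nlinarith
  · rw [sub_eq_zero.1 hzero] at hlt hw
    linarith
  · rw [mem_Ioo, lt_div_iff₀ hpos, div_lt_iff₀ hpos]
    constructor <;> nlinarith

lemma max_affine (m₁ k₁ m₂ k₂ : ℝ) :
    IsPiecewiseAffine fun x => max (m₁ * x + k₁) (m₂ * x + k₂) := by
  convert sup' {0, 1} (Finset.insert_nonempty _ _) ![m₁, m₂] ![k₁, k₂] using 2 with x
  simp

end IsPiecewiseAffine

/-! ### Polygons bounded by two graphs -/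

namespace Plane

lemma continuous_mk {X : Type*} [TopologicalSpace X] {u v : X → ℝ} (hu : Continuous u)
    (hv : Continuous v) : Continuous fun x => (!₂[u x, v x] : Plane) := by
  refine (PiLp.continuous_toLp 2 _).comp (continuous_pi fun i => ?_)
  fin_cases i <;> simpa

/-- The point of the graph of `f` above `x`. -/
def graphPoint (f : ℝ → ℝ) (x : ℝ) : Plane := !₂[x, f x]

lemma continuous_graphPoint {f : ℝ → ℝ} (hf : Continuous f) : Continuous (graphPoint f) :=
  continuous_mk continuous_id hf

lemma graphPoint_injective (f : ℝ → ℝ) : Function.Injective (graphPoint f) := fun x y hxy => by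
  simpa [graphPoint] using congrArg (fun p : Plane => p 0) hxy

lemma image_graphPoint (f : ℝ → ℝ) (s : Set ℝ) :
    graphPoint f '' s = {p | p 0 ∈ s ∧ p 1 = f (p 0)} := by
  ext p
  constructor
  · rintro ⟨x, hx, rfl⟩
    simpa [graphPoint]
  · rintro ⟨hx, hp⟩
    refine ⟨p 0, hx, ?_⟩
    ext i
    fin_cases i <;> simp [graphPoint, hp]

end Plane

lemma IsPiecewiseAffine.graphPoint {f : ℝ → ℝ} (hf : IsPiecewiseAffine f) :
    IsPiecewiseAffine (Plane.graphPoint f) := by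
  obtain ⟨B, hB⟩ := hf
  refine ⟨B, fun u v huv => ?_⟩
  obtain ⟨A, hA⟩ := hB u v huv
  refine ⟨(WithLp.linearEquiv 2 ℝ (Fin 2 → ℝ)).symm.toLinearMap.toAffineMap.comp
    (AffineMap.pi ![AffineMap.id ℝ ℝ, A]), fun x hx => ?_⟩
  ext i
  fin_cases i <;> simp [Plane.graphPoint, hA hx]

open AffineMap (lineMap)

/-- The closed curve that runs along the graph of `f` from `a` to `b` in the time interval
`[0,1/2]`, and back along the graph of `g` from `b` to `a` in `[1/2,1]`. The first coordinate is
affine on each half; extrapolated to all of `[0,1]` it joins `a` and `2 * b - a`. -/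
def graphLoop (f g : ℝ → ℝ) (a b s : ℝ) : Plane :=
  if s ≤ 1 / 2 then Plane.graphPoint f (lineMap a (2 * b - a) s)
  else Plane.graphPoint g (lineMap (2 * b - a) a s)

namespace graphLoop

variable {f g : ℝ → ℝ} {a b : ℝ}

lemma lineMap_half (a b : ℝ) : lineMap a (2 * b - a) (1 / 2 : ℝ) = b := by
  rw [AffineMap.lineMap_apply_ring]; ring

lemma lineMap_half' (a b : ℝ) : lineMap (2 * b - a) a (1 / 2 : ℝ) = b := by
  rw [AffineMap.lineMap_apply_ring]; ring

lemma graphPoint_lineMap_half (hb : f b = g b) :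
    Plane.graphPoint f (lineMap a (2 * b - a) (1 / 2 : ℝ)) =
      Plane.graphPoint g (lineMap (2 * b - a) a (1 / 2 : ℝ)) := by
  simp only [lineMap_half, lineMap_half', Plane.graphPoint, hb]

lemma eqOn_left : EqOn (graphLoop f g a b) (Plane.graphPoint f ∘ lineMap a (2 * b - a))
    (Icc 0 (1 / 2)) := fun _ hs => if_pos hs.2

lemma eqOn_right (hb : f b = g b) :
    EqOn (graphLoop f g a b) (Plane.graphPoint g ∘ lineMap (2 * b - a) a) (Icc (1 / 2) 1) := by
  intro s hs
  rcases hs.1.eq_or_lt with rfl | hlt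
  · exact (if_pos le_rfl).trans (graphPoint_lineMap_half hb)
  · exact if_neg hlt.not_ge

protected lemma continuous (hf : Continuous f) (hg : Continuous g) (hb : f b = g b) :
    Continuous (graphLoop f g a b) :=
  Continuous.if_le ((Plane.continuous_graphPoint hf).comp AffineMap.lineMap_continuous)
    ((Plane.continuous_graphPoint hg).comp AffineMap.lineMap_continuous) continuous_id
    continuous_const fun _ hs => hs ▸ graphPoint_lineMap_half hb

protected lemma isPiecewiseAffine (hab : a < b) (hf : IsPiecewiseAffine f)
    (hg : IsPiecewiseAffine g) (hb : f b = g b) : IsPiecewiseAffine (graphLoop f g a b) :=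
  (hf.graphPoint.comp_affineMap (AffineMap.lineMap_injective ℝ (by linarith))).ite
    (hg.graphPoint.comp_affineMap (AffineMap.lineMap_injective ℝ (by linarith)))
    (graphPoint_lineMap_half hb)

lemma apply_zero_eq_apply_one (ha : f a = g a) : graphLoop f g a b 0 = graphLoop f g a b 1 := by
  norm_num [graphLoop, Plane.graphPoint, ha]

protected lemma injOn (hab : a < b) (hfg : ∀ x ∈ Ioo a b, f x < g x) (hb : f b = g b) :
    InjOn (graphLoop f g a b) (Ico 0 1) := by
  have hleft : InjOn (graphLoop f g a b) (Icc 0 (1 / 2)) :=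
    ((Plane.graphPoint_injective f).comp
      (AffineMap.lineMap_injective ℝ (by linarith))).injOn.congr eqOn_left.symm
  have hright : InjOn (graphLoop f g a b) (Icc (1 / 2) 1) :=
    ((Plane.graphPoint_injective g).comp
      (AffineMap.lineMap_injective ℝ (by linarith))).injOn.congr (eqOn_right hb).symm
  rw [← Icc_union_Ioo_eq_Ico (show (0 : ℝ) ≤ 1 / 2 by norm_num) (by norm_num),
    injOn_union (Set.disjoint_left.2 fun s hs hs' => hs.2.not_gt hs'.1)]
  refine ⟨hleft, hright.mono Ioo_subset_Icc_self, fun s hs r hr heq => ?_⟩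
  rw [eqOn_left hs, eqOn_right hb (Ioo_subset_Icc_self hr)] at heq
  set x := lineMap a (2 * b - a) s
  set y := lineMap (2 * b - a) a r with hy
  have hxy : x = y := by simpa [Plane.graphPoint] using congrArg (fun p : Plane => p 0) heq
  have hfy : f x = g y := by simpa [Plane.graphPoint] using congrArg (fun p : Plane => p 1) heq
  have hmem : y ∈ Ioo a b := by
    rw [hy, AffineMap.lineMap_apply_ring]
    constructor <;> nlinarith [hr.1, hr.2]
  exact (hfg y hmem).ne (hxy ▸ hfy)

lemma image_Icc (hab : a ≤ b) (hb : f b = g b) :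
    graphLoop f g a b '' Icc 0 1 = {p | p 0 ∈ Icc a b ∧ (p 1 = f (p 0) ∨ p 1 = g (p 0))} := by
  have hleft : lineMap a (2 * b - a) '' Icc (0 : ℝ) (1 / 2) = Icc a b := by
    rw [← segment_eq_Icc (by norm_num), image_segment, AffineMap.lineMap_apply_zero, lineMap_half,
      segment_eq_Icc hab]
  have hright : lineMap (2 * b - a) a '' Icc (1 / 2 : ℝ) 1 = Icc a b := by
    rw [← segment_eq_Icc (by norm_num), image_segment, AffineMap.lineMap_apply_one, lineMap_half',
      segment_symm, segment_eq_Icc hab]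
  rw [← Icc_union_Icc_eq_Icc (show (0 : ℝ) ≤ 1 / 2 by norm_num) (by norm_num), image_union,
    eqOn_left.image_eq, (eqOn_right hb).image_eq, image_comp, image_comp, hleft, hright,
    Plane.image_graphPoint, Plane.image_graphPoint]
  ext p
  exact and_or_left.symm

end graphLoop

lemma SimplePolygon.region_eq_of_bdryCurve_eq_diff {P : SimplePolygon} {Q U : Set Plane}
    (hQ : IsClosed Q) (hU : IsOpen U) (hUQ : U ⊆ Q) (hbdd : Bornology.IsBounded U)
    (hunb : ∀ p ∉ Q, ∃ C ⊆ Qᶜ, IsPreconnected C ∧ p ∈ C ∧ ¬ Bornology.IsBounded C)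
    (hP : P.bdryCurve = Q \ U) : P.region = Q := by
  have hcompl : P.bdryCurveᶜ = U ∪ Qᶜ := by rw [hP, compl_sdiff]
  have hinside : ∀ p ∈ U, Bornology.IsBounded (connectedComponentIn P.bdryCurveᶜ p) := by
    intro p hp
    have hpc : p ∈ P.bdryCurveᶜ := hcompl ▸ Or.inl hp
    exact hbdd.subset <| isPreconnected_connectedComponentIn.subset_left_of_subset_union hU
      hQ.isOpen_compl (disjoint_compl_right.mono_left hUQ)
      ((connectedComponentIn_subset _ _).trans hcompl.subset) ⟨p, mem_connectedComponentIn hpc, hp⟩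
  have houtside : ∀ p ∉ Q, ¬ Bornology.IsBounded (connectedComponentIn P.bdryCurveᶜ p) := by
    intro p hp hb
    obtain ⟨C, hCQ, hC, hpC, hCunb⟩ := hunb p hp
    exact hCunb (hb.subset (hC.subset_connectedComponentIn hpC
      (hCQ.trans (hcompl ▸ subset_union_right))))
  ext p
  constructor
  · rintro (hp | ⟨-, hp⟩)
    · exact (hP ▸ hp).1
    · exact not_not.1 fun hpQ => houtside p hpQ hp
  · intro hp
    by_cases hpU : p ∈ U
    · exact Or.inr ⟨fun h => (hP ▸ h).2 hpU, hinside p hpU⟩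
    · exact Or.inl (hP ▸ ⟨hp, hpU⟩)

/-- The closed region between the graphs of `f` and `g`. -/
def regionBetweenGraphs (f g : ℝ → ℝ) : Set Plane := {p | f (p 0) ≤ p 1 ∧ p 1 ≤ g (p 0)}

section RegionBetweenGraphs

variable {f g : ℝ → ℝ} {a b : ℝ}

lemma isClosed_regionBetweenGraphs (hf : Continuous f) (hg : Continuous g) :
    IsClosed (regionBetweenGraphs f g) := by
  have h0 : Continuous fun p : Plane => p 0 := by fun_prop
  have h1 : Continuous fun p : Plane => p 1 := by fun_prop
  exact (isClosed_le (hf.comp h0) h1).inter (isClosed_le h1 (hg.comp h0))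

lemma isBounded_regionBetweenGraphs (hf : Continuous f) (hg : Continuous g)
    (hfg : ∀ x, f x ≤ g x → x ∈ Icc a b) : Bornology.IsBounded (regionBetweenGraphs f g) := by
  obtain ⟨l, hl⟩ := (isCompact_Icc (a := a) (b := b)).bddBelow_image hf.continuousOn
  obtain ⟨r, hr⟩ := (isCompact_Icc (a := a) (b := b)).bddAbove_image hg.continuousOn
  have hbdd : Bornology.IsBounded (Set.univ.pi ![Icc a b, Icc l r]) :=
    Bornology.IsBounded.pi fun i => by fin_cases i <;> exact isBounded_Icc _ _
  refine ((PiLp.antilipschitzWith_ofLp 2 fun _ : Fin 2 => ℝ).isBounded_preimage hbdd).subset ?_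
  intro p hp i _
  have hx : p 0 ∈ Icc a b := hfg _ (hp.1.trans hp.2)
  fin_cases i
  · exact hx
  · exact ⟨(hl (mem_image_of_mem f hx)).trans hp.1, hp.2.trans (hr (mem_image_of_mem g hx))⟩

lemma Plane.isPreconnected_vertical (x : ℝ) {s : Set ℝ} (hs : IsPreconnected s) :
    IsPreconnected {p : Plane | p 0 = x ∧ p 1 ∈ s} := by
  have himage : (fun y => (!₂[x, y] : Plane)) '' s = {p | p 0 = x ∧ p 1 ∈ s} := by
    ext p
    constructor
    · rintro ⟨y, hy, rfl⟩
      simpa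
    · rintro ⟨rfl, hp⟩
      refine ⟨p 1, hp, ?_⟩
      ext i
      fin_cases i <;> rfl
  rw [← himage]
  exact hs.image _ (Plane.continuous_mk continuous_const continuous_id).continuousOn

lemma Plane.isBounded_of_isBounded_vertical {x : ℝ} {s : Set ℝ}
    (h : Bornology.IsBounded {p : Plane | p 0 = x ∧ p 1 ∈ s}) : Bornology.IsBounded s := by
  refine ((EuclideanSpace.proj (𝕜 := ℝ) (1 : Fin 2)).lipschitz.isBounded_image h).subset ?_
  exact fun y hy => ⟨!₂[x, y], by simpa, by simp⟩

lemma exists_unbounded_of_notMem_regionBetweenGraphs {p : Plane}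
    (hp : p ∉ regionBetweenGraphs f g) :
    ∃ C ⊆ (regionBetweenGraphs f g)ᶜ, IsPreconnected C ∧ p ∈ C ∧ ¬ Bornology.IsBounded C := by
  rcases not_and_or.1 hp with h | h <;> rw [not_le] at h
  · refine ⟨{q | q 0 = p 0 ∧ q 1 ∈ Iic (p 1)}, ?_,
      Plane.isPreconnected_vertical _ isPreconnected_Iic, ⟨rfl, self_mem_Iic⟩,
      fun hb => not_bddBelow_Iic _ (Plane.isBounded_of_isBounded_vertical hb).bddBelow⟩
    rintro q ⟨hq0, hq1⟩ hq
    exact ((hq0 ▸ hq.1).trans hq1).not_gt h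
  · refine ⟨{q | q 0 = p 0 ∧ q 1 ∈ Ici (p 1)}, ?_,
      Plane.isPreconnected_vertical _ isPreconnected_Ici, ⟨rfl, self_mem_Ici⟩,
      fun hb => not_bddAbove_Ici _ (Plane.isBounded_of_isBounded_vertical hb).bddAbove⟩
    rintro q ⟨hq0, hq1⟩ hq
    exact (le_trans hq1 (hq0 ▸ hq.2)).not_gt h

theorem exists_simplePolygon_region_eq (hab : a < b) (hfc : Continuous f) (hgc : Continuous g)
    (hf : IsPiecewiseAffine f) (hg : IsPiecewiseAffine g)
    (hlt : ∀ x, f x < g x ↔ x ∈ Ioo a b) (hle : ∀ x, f x ≤ g x ↔ x ∈ Icc a b) :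
    ∃ P : SimplePolygon, P.region = regionBetweenGraphs f g := by
  have ha : f a = g a := ((hle a).2 (left_mem_Icc.2 hab.le)).eq_of_not_lt (by simp [hlt])
  have hb : f b = g b := ((hle b).2 (right_mem_Icc.2 hab.le)).eq_of_not_lt (by simp [hlt])
  let P : SimplePolygon :=
    { toFun := graphLoop f g a b
      continuous := graphLoop.continuous hfc hgc hb
      closed := graphLoop.apply_zero_eq_apply_one ha
      injOn := graphLoop.injOn hab (fun x hx => (hlt x).2 hx) hb
      polygonal := (graphLoop.isPiecewiseAffine hab hf hg hb).exists_partition }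
  have h0 : Continuous fun p : Plane => p 0 := by fun_prop
  have h1 : Continuous fun p : Plane => p 1 := by fun_prop
  set U : Set Plane := {p | f (p 0) < p 1} ∩ {p | p 1 < g (p 0)}
  have hU : IsOpen U := (isOpen_lt (hfc.comp h0) h1).inter (isOpen_lt h1 (hgc.comp h0))
  have hUQ : U ⊆ regionBetweenGraphs f g := fun p hp => ⟨hp.1.le, hp.2.le⟩
  have hcurve : P.bdryCurve = regionBetweenGraphs f g \ U := by
    refine (graphLoop.image_Icc hab.le hb).trans (Set.ext fun p => ?_)
    simp only [regionBetweenGraphs, U, mem_sdiff, mem_inter_iff, mem_ofPred_eq, ← hle]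
    grind
  exact ⟨P, P.region_eq_of_bdryCurve_eq_diff (isClosed_regionBetweenGraphs hfc hgc) hU hUQ
    ((isBounded_regionBetweenGraphs hfc hgc fun x => (hle x).1).subset hUQ)
    (fun _ => exists_unbounded_of_notMem_regionBetweenGraphs) hcurve⟩

end RegionBetweenGraphs

/-! ### A polygonal floor close to a circular arc -/

open scoped InnerProductSpace

namespace Plane

lemma norm_sq_eq (p : Plane) : ‖p‖ ^ 2 = p 0 ^ 2 + p 1 ^ 2 := by
  rw [EuclideanSpace.real_norm_sq_eq, Fin.sum_univ_two]

lemma inner_eq (e p : Plane) : ⟪e, p⟫_ℝ = e 0 * p 0 + e 1 * p 1 := by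
  simp [PiLp.inner_apply, Fin.sum_univ_two, mul_comm]

/-- The direction of `p` itself may have a vanishing second coordinate, and is tilted slightly
towards `(0, -1)`. -/
lemma exists_lt_inner {R : ℝ} (hR : 0 ≤ R) {p : Plane} (hp0 : 0 ≤ p 0) (hp1 : p 1 ≤ 0)
    (hp : R < ‖p‖) : ∃ e : Plane, ‖e‖ ≤ 1 ∧ 0 ≤ e 0 ∧ e 1 < 0 ∧ R < ⟪e, p⟫_ℝ := by
  have hpos : 0 < ‖p‖ := hR.trans_lt hp
  obtain ⟨t, hRt, ht1⟩ := exists_between ((div_lt_one hpos).2 hp)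
  have ht0 : 0 ≤ t := (div_nonneg hR hpos.le).trans hRt.le
  refine ⟨(t / ‖p‖) • p + (1 - t) • !₂[0, -1], ?_, ?_, ?_, ?_⟩
  · have hdown : ‖(!₂[0, -1] : Plane)‖ = 1 := by simp [EuclideanSpace.norm_eq]
    refine (norm_add_le _ _).trans ?_
    rw [norm_smul_of_nonneg (by positivity), norm_smul_of_nonneg (by linarith), hdown,
      div_mul_cancel₀ _ hpos.ne']
    linarith
  · simpa using mul_nonneg (div_nonneg ht0 hpos.le) hp0
  · have : t / ‖p‖ * p 1 ≤ 0 := mul_nonpos_of_nonneg_of_nonpos (by positivity) hp1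
    change t / ‖p‖ * p 1 + (1 - t) * -1 < 0
    linarith
  · have hdown : ⟪!₂[0, -1], p⟫_ℝ = -p 1 := by simp [inner_eq]
    rw [inner_add_left, real_inner_smul_left, real_inner_smul_left, real_inner_self_eq_norm_sq,
      hdown]
    have hmain : t / ‖p‖ * ‖p‖ ^ 2 = t * ‖p‖ := by field_simp
    have htilt : 0 ≤ (1 - t) * -p 1 := mul_nonneg (by linarith) (by linarith)
    linarith [(div_lt_iff₀ hpos).1 hRt]

/-- By compactness of the arc of radius `ρ`; the points farther out are scaled back to it. -/
lemma exists_finset_lt_inner {R ρ : ℝ} (hR : 0 ≤ R) (hρ : R < ρ) :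
    ∃ N : Finset Plane, (∀ e ∈ N, ‖e‖ ≤ 1 ∧ 0 ≤ e 0 ∧ e 1 < 0) ∧
      ∀ p : Plane, 0 ≤ p 0 → p 1 ≤ 0 → ρ ≤ ‖p‖ → ∃ e ∈ N, R < ⟪e, p⟫_ℝ := by
  have hρ0 : 0 < ρ := hR.trans_lt hρ
  set K : Set Plane := sphere 0 ρ ∩ ({p | 0 ≤ p 0} ∩ {p | p 1 ≤ 0})
  have hK : IsCompact K := (isCompact_sphere 0 ρ).inter_right <|
    (isClosed_le continuous_const (by fun_prop)).inter (isClosed_le (by fun_prop) continuous_const)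
  obtain ⟨N, hND, hNfin, hKN⟩ := hK.elim_finite_subcover_image
    (b := {e : Plane | ‖e‖ ≤ 1 ∧ 0 ≤ e 0 ∧ e 1 < 0}) (c := fun e => {p | R < ⟪e, p⟫_ℝ})
    (fun e _ => isOpen_lt continuous_const (by fun_prop)) fun p ⟨hp, hp0, hp1⟩ => by
      obtain ⟨e, he, he0, he1, hep⟩ :=
        exists_lt_inner hR hp0 hp1 (hρ.trans_eq (mem_sphere_zero_iff_norm.1 hp).symm)
      exact mem_biUnion (show e ∈ {e : Plane | _} from ⟨he, he0, he1⟩) hep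
  refine ⟨hNfin.toFinset, fun e he => hND (hNfin.mem_toFinset.1 he), fun p hp0 hp1 hp => ?_⟩
  have hpos : 0 < ‖p‖ := hρ0.trans_le hp
  have hscale : (ρ / ‖p‖) • p ∈ K := by
    refine ⟨?_, ?_, ?_⟩
    · rw [mem_sphere_zero_iff_norm, norm_smul_of_nonneg (by positivity), div_mul_cancel₀ _ hpos.ne']
    · exact mul_nonneg (div_nonneg hρ0.le hpos.le) hp0
    · exact mul_nonpos_of_nonneg_of_nonpos (div_nonneg hρ0.le hpos.le) hp1
  obtain ⟨e, he, hlt⟩ := mem_iUnion₂.1 (hKN hscale)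
  refine ⟨e, hNfin.mem_toFinset.2 he, ?_⟩
  rw [mem_ofPred_eq, real_inner_smul_right] at hlt
  nlinarith [(div_le_one hpos).2 hp, div_pos hρ0 hpos]

end Plane

/-- The lower boundary of the polygon of all `p` with `⟪e, p⟫ ≤ R` for every `e ∈ N`, as a graph.
The normals `e ∈ N` are assumed to point downwards. -/
def polygonalFloor (R : ℝ) (N : Finset Plane) (hN : N.Nonempty) (x : ℝ) : ℝ :=
  N.sup' hN fun e => -e 0 / e 1 * x + R / e 1

section PolygonalFloor

variable {R : ℝ} {N : Finset Plane} {hN : N.Nonempty}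

lemma polygonalFloor_le_iff (hdown : ∀ e ∈ N, e 1 < 0) (p : Plane) :
    polygonalFloor R N hN (p 0) ≤ p 1 ↔ ∀ e ∈ N, ⟪e, p⟫_ℝ ≤ R := by
  refine (Finset.sup'_le_iff hN _).trans (forall₂_congr fun e he => ?_)
  have he1 := hdown e he
  rw [Plane.inner_eq, div_mul_eq_mul_div, ← add_div, div_le_iff_of_neg he1]
  constructor <;> intro h <;> linarith

lemma convexOn_polygonalFloor : ConvexOn ℝ univ (polygonalFloor R N hN) := by
  refine ⟨convex_univ, fun x _ y _ α β hα hβ hαβ => Finset.sup'_le hN _ fun e he => ?_⟩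
  have hle : ∀ z, -e 0 / e 1 * z + R / e 1 ≤ polygonalFloor R N hN z := fun z =>
    Finset.le_sup' (fun e => -e 0 / e 1 * z + R / e 1) he
  calc -e 0 / e 1 * (α • x + β • y) + R / e 1
      = α • (-e 0 / e 1 * x + R / e 1) + β • (-e 0 / e 1 * y + R / e 1) := by
        simp only [smul_eq_mul]
        linear_combination -(R / e 1) * hαβ
    _ ≤ _ := by gcongr <;> exact hle _

lemma monotone_polygonalFloor (hN0 : ∀ e ∈ N, 0 ≤ e 0 ∧ e 1 < 0) :
    Monotone (polygonalFloor R N hN) := fun x y hxy =>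
  Finset.sup'_mono_fun fun e he => by
    have : 0 ≤ -e 0 / e 1 :=
      div_nonneg_of_nonpos (neg_nonpos.2 (hN0 e he).1) (hN0 e he).2.le
    gcongr

end PolygonalFloor

lemma exists_circular_floor {R ρ K : ℝ} (hR : 0 ≤ R) (hρ : R < ρ) (hK : 0 ≤ K) :
    ∃ φ : ℝ → ℝ, IsPiecewiseAffine φ ∧ ConvexOn ℝ univ φ ∧ Monotone φ ∧
      (∀ p : Plane, ‖p‖ ≤ R → φ (p 0) ≤ p 1) ∧
      (∀ p : Plane, 0 ≤ p 0 → φ (p 0) ≤ p 1 → p 1 ≤ 0 → ‖p‖ < ρ) ∧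
      ∃ C, ∀ t, K * t - C ≤ φ t := by
  obtain ⟨N, hN, hcover⟩ := Plane.exists_finset_lt_inner hR hρ
  -- The half plane with normal `e₀` makes the floor grow with slope at least `K`.
  set e₀ : Plane := !₂[K / (K + 1), -1 / (K + 1)]
  have hK1 : 0 < K + 1 := by linarith
  have he₀ : e₀ 0 = K / (K + 1) ∧ e₀ 1 = -1 / (K + 1) := ⟨rfl, rfl⟩
  have he₀N : ‖e₀‖ ≤ 1 ∧ 0 ≤ e₀ 0 ∧ e₀ 1 < 0 := by
    rw [he₀.1, he₀.2]
    refine ⟨?_, by positivity, div_neg_of_neg_of_pos (by norm_num) hK1⟩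
    rw [← sq_le_one_iff₀ (norm_nonneg _), Plane.norm_sq_eq, he₀.1, he₀.2, div_pow, div_pow,
      ← add_div, div_le_one (by positivity)]
    linarith [sq_nonneg K]
  have hI : ∀ e ∈ insert e₀ N, ‖e‖ ≤ 1 ∧ 0 ≤ e 0 ∧ e 1 < 0 :=
    Finset.forall_mem_insert _ _ _ |>.2 ⟨he₀N, hN⟩
  have hfloor := polygonalFloor_le_iff (R := R) (hN := Finset.insert_nonempty e₀ N)
    fun e he => (hI e he).2.2
  refine ⟨polygonalFloor R (insert e₀ N) (Finset.insert_nonempty _ _),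
    IsPiecewiseAffine.sup' _ _ _ _, convexOn_polygonalFloor,
    monotone_polygonalFloor fun e he => (hI e he).2, fun p hp => ?_, fun p hp0 hp hp1 => ?_,
    R * (K + 1), fun t => ?_⟩
  · refine (hfloor p).2 fun e he => (real_inner_le_norm e p).trans ?_
    nlinarith [(hI e he).1, norm_nonneg p, norm_nonneg e]
  · by_contra! hfar
    obtain ⟨e, he, hlt⟩ := hcover p hp0 hp1 hfar
    exact ((hfloor p).1 hp e (Finset.mem_insert_of_mem he)).not_gt hlt
  · refine le_of_eq_of_le ?_ (Finset.le_sup' (fun e : Plane => -e 0 / e 1 * t + R / e 1)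
      (Finset.mem_insert_self e₀ N))
    rw [he₀.1, he₀.2]
    field_simp
    ring

lemma exists_crossing_of_convexOn {ψ : ℝ → ℝ} (hψ : ConvexOn ℝ univ ψ) {b d : ℝ} (hbd : b < d)
    (hb : ψ b < 0) (hd : 0 ≤ ψ d) :
    ∃ a, b < a ∧ ∀ t, b ≤ t → (ψ t < 0 ↔ t < a) ∧ (ψ t ≤ 0 ↔ t ≤ a) := by
  have hcont : ContinuousOn ψ (Icc b d) := (hψ.continuousOn isOpen_univ).mono (subset_univ _)
  obtain ⟨a, ⟨hba, -⟩, ha⟩ := intermediate_value_Icc hbd.le hcont ⟨hb.le, hd⟩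
  have hba : b < a := hba.lt_of_ne (by rintro rfl; exact hb.ne ha)
  have hneg : ∀ t, b ≤ t → t < a → ψ t < 0 := fun t hbt hta => by
    by_contra! ht
    have hbt : b < t := hbt.lt_of_ne (by rintro rfl; exact hb.not_ge ht)
    have := hψ.lt_right_of_left_lt (mem_univ b) (mem_univ a)
      (by rw [openSegment_eq_Ioo hba]; exact ⟨hbt, hta⟩) (hb.trans_le ht)
    linarith
  have hpos : ∀ t, a < t → 0 < ψ t := fun t hat => by
    have := hψ.lt_right_of_left_lt (mem_univ b) (mem_univ t)
      (by rw [openSegment_eq_Ioo (hba.trans hat)]; exact ⟨hba, hat⟩) (hb.trans_eq ha.symm)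
    rwa [ha] at this
  refine ⟨a, hba, fun t hbt => ?_⟩
  rcases lt_trichotomy t a with h | h | h
  · simp [hneg t hbt h, (hneg t hbt h).le, h, h.le]
  · simp [h, ha]
  · simp [(hpos t h).not_gt, (hpos t h).not_ge, h.not_gt, h.not_ge]

lemma convexOn_comp_abs {φ : ℝ → ℝ} (hφ : ConvexOn ℝ univ φ) (hmono : Monotone φ) :
    ConvexOn ℝ univ fun x => φ |x| := by
  have hconv : Convex ℝ ((‖·‖ : ℝ → ℝ) '' univ) :=
    (isPreconnected_univ.image _ continuous_norm.continuousOn).ordConnected.convex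
  exact (hφ.subset (subset_univ _) hconv).comp convexOn_univ_norm (hmono.monotoneOn _)

/-! ### Discs contained in a set -/

lemma segment_subset_setOf_ball_subset {E : Type*} [SeminormedAddCommGroup E] [NormedSpace ℝ E]
    {A : Set E} {p q : E} {r : ℝ} (h : ∀ v, ‖v‖ < r → segment ℝ (v + p) (v + q) ⊆ A) :
    segment ℝ p q ⊆ {x | ball x r ⊆ A} := by
  intro x hx y hy
  refine h (y - x) (mem_ball_iff_norm.1 hy) ?_
  rw [← sub_add_cancel y x]
  simpa only [add_sub_cancel_right] using (mem_segment_translate ℝ (y - x)).2 hx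

lemma ball_subset_setOf_le_inner {E : Type*} [SeminormedAddCommGroup E] [InnerProductSpace ℝ E]
    {e p : E} {k r : ℝ} (he : ‖e‖ ≤ 1) (h : k + r ≤ ⟪e, p⟫_ℝ) : ball p r ⊆ {q | k ≤ ⟪e, q⟫_ℝ} := by
  intro q hq
  have hinner : ⟪e, p - q⟫_ℝ ≤ ‖p - q‖ :=
    (real_inner_le_norm e _).trans (mul_le_of_le_one_left (norm_nonneg _) he)
  rw [inner_sub_right] at hinner
  have := mem_ball_iff_norm'.1 hq
  rw [mem_ofPred_eq]
  linarith

/-! ### The notched chamber -/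

/-- The distance of the point `(1 + η + c, -√(1 - c ^ 2))` from the origin. -/
def pocketRadius (c η : ℝ) : ℝ := √((1 + η) ^ 2 + 2 * (1 + η) * c + 1)

/-- Data for a chamber with a nearly circular floor around the origin, two side pockets, and an
upward exit between two tips at `(±(1 + η), 0)` of the ceiling. The outer sides of the tips have
slope `±c / √(1 - c ^ 2)`. -/
structure NotchedChamber where
  /-- the cosine of the angle between the outer sides of the tips and the vertical -/
  c : ℝ
  /-- the half width of the exit, reduced by the radius of the discs -/
  η : ℝ
  c_pos : 0 < c
  c_lt_one : c < 1
  η_pos : 0 < η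
  η_lt_one : η < 1
  /-- the lower boundary of the chamber, as a graph -/
  floor : ℝ → ℝ
  isPiecewiseAffine_floor : IsPiecewiseAffine floor
  convexOn_floor : ConvexOn ℝ univ floor
  floor_abs : ∀ x, floor |x| = floor x
  floor_le : ∀ p : Plane, ‖p‖ < 1 + pocketRadius c η → floor (p 0) ≤ p 1
  norm_lt : ∀ p : Plane, floor (p 0) ≤ p 1 → p 1 ≤ 0 → ‖p‖ < 3 - η
  exists_le_floor : ∃ d, 1 + η < d ∧ c / √(1 - c ^ 2) * (d - (1 + η)) ≤ floor d

namespace NotchedChamber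

variable (N : NotchedChamber) {p : Plane} {x : ℝ}

/-- The upper boundary of the chamber, as a graph. Its only zeros are the tips. -/
def ceiling (x : ℝ) : ℝ :=
  max (4 / N.η * (1 + N.η - |x|)) (N.c / √(1 - N.c ^ 2) * (|x| - (1 + N.η)))

/-- The chamber, as a subset of the plane. -/
def region : Set Plane := regionBetweenGraphs N.floor N.ceiling

/-- The positions of unit discs in the chamber. -/
def freeSpace : Set Plane := {p | ball p 1 ⊆ N.region}

lemma one_sub_c_sq_pos : 0 < 1 - N.c ^ 2 := by
  nlinarith [N.c_pos, N.c_lt_one]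

lemma slope_nonneg : 0 ≤ N.c / √(1 - N.c ^ 2) := div_nonneg N.c_pos.le (Real.sqrt_nonneg _)

lemma ceiling_nonneg (x : ℝ) : 0 ≤ N.ceiling x := by
  rcases le_total |x| (1 + N.η) with h | h
  · exact le_max_of_le_left
      (mul_nonneg (div_nonneg zero_le_four N.η_pos.le) (sub_nonneg.2 h))
  · exact le_max_of_le_right (mul_nonneg N.slope_nonneg (sub_nonneg.2 h))

lemma ceiling_of_le_abs (hx : 1 + N.η ≤ |x|) :
    N.ceiling x = N.c / √(1 - N.c ^ 2) * (|x| - (1 + N.η)) :=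
  max_eq_right <| (mul_nonpos_of_nonneg_of_nonpos (div_nonneg zero_le_four N.η_pos.le)
    (sub_nonpos.2 hx)).trans (mul_nonneg N.slope_nonneg (sub_nonneg.2 hx))

lemma isPiecewiseAffine_ceiling : IsPiecewiseAffine N.ceiling := by
  convert (IsPiecewiseAffine.max_affine (-(4 / N.η)) (4 / N.η * (1 + N.η))
    (N.c / √(1 - N.c ^ 2)) (-(N.c / √(1 - N.c ^ 2) * (1 + N.η)))).comp_abs using 2 with x
  rw [ceiling]
  congr 1 <;> ring

lemma continuous_floor : Continuous N.floor :=
  continuousOn_univ.1 (N.convexOn_floor.continuousOn isOpen_univ)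

lemma continuous_ceiling : Continuous N.ceiling := by
  unfold ceiling
  fun_prop

lemma floor_le_neg_one (hx : |x| ≤ 1 + N.η) : N.floor x ≤ -1 := by
  have hη := N.η_pos
  have hc := N.c_pos
  refine N.floor_le !₂[x, -1] ((Real.le_sqrt_of_sq_le ?_).trans_lt (lt_one_add _))
  have hx2 : x ^ 2 ≤ (1 + N.η) ^ 2 := sq_le_sq.2 (hx.trans (le_abs_self _))
  have hηc : 0 ≤ 2 * (1 + N.η) * N.c := by positivity
  rw [Plane.norm_sq_eq]
  change x ^ 2 + (-1) ^ 2 ≤ _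
  linarith

lemma exists_abs_lt_iff : ∃ a, 0 < a ∧
    ∀ x, (N.floor x < N.ceiling x ↔ |x| < a) ∧ (N.floor x ≤ N.ceiling x ↔ |x| ≤ a) := by
  obtain ⟨d, hd, hdf⟩ := N.exists_le_floor
  have hη := N.η_pos
  set K := N.c / √(1 - N.c ^ 2) with hK
  have hconv : ConvexOn ℝ univ fun t => N.floor t - K * (t - (1 + N.η)) := by
    refine N.convexOn_floor.sub ⟨convex_univ, fun x _ y _ α β _ _ hαβ => le_of_eq ?_⟩
    simp only [smul_eq_mul]
    linear_combination -(K * (1 + N.η)) * hαβ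
  have htip : N.floor (1 + N.η) ≤ -1 := N.floor_le_neg_one (abs_of_pos (by linarith)).le
  obtain ⟨a, hba, ha⟩ := exists_crossing_of_convexOn hconv hd (by linarith) (by linarith)
  refine ⟨a, by linarith, fun x => ?_⟩
  rcases le_total |x| (1 + N.η) with hx | hx
  · have hlt : N.floor x < N.ceiling x := by
      linarith [N.floor_le_neg_one hx, N.ceiling_nonneg x]
    simp [hlt, hlt.le, hx.trans_lt hba, (hx.trans_lt hba).le]
  · rw [N.ceiling_of_le_abs hx, ← hK, ← N.floor_abs]
    simpa only [sub_neg, sub_nonpos] using ha |x| hx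

lemma exists_simplePolygon : ∃ P : SimplePolygon, P.region = N.region := by
  obtain ⟨a, ha, h⟩ := N.exists_abs_lt_iff
  exact exists_simplePolygon_region_eq (a := -a) (b := a) (by linarith) N.continuous_floor
    N.continuous_ceiling N.isPiecewiseAffine_floor N.isPiecewiseAffine_ceiling
    (fun x => (h x).1.trans abs_lt) (fun x => (h x).2.trans abs_le)

lemma closedBall_subset_region (hp : p ∈ N.freeSpace) : closedBall p 1 ⊆ N.region :=
  closure_ball p one_ne_zero ▸
    closure_minimal hp (isClosed_regionBetweenGraphs N.continuous_floor N.continuous_ceiling)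

end NotchedChamber

/-- The unit normal, for `σ = ±1`, of the lines of slope `σ * k / √(1 - k ^ 2)`. For `0 ≤ k ≤ c`
the points below such a line through the tip `(σ * (1 + η), 0)` of a notched chamber are below its
ceiling. -/
def tipNormal (σ k : ℝ) : Plane := !₂[σ * k, -√(1 - k ^ 2)]

lemma norm_tipNormal {σ k : ℝ} (hσ : |σ| = 1) (hk : k ^ 2 ≤ 1) : ‖tipNormal σ k‖ = 1 := by
  rw [← sq_eq_sq₀ (norm_nonneg _) zero_le_one, Plane.norm_sq_eq]
  change (σ * k) ^ 2 + (-√(1 - k ^ 2)) ^ 2 = 1 ^ 2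
  rw [mul_pow, ← sq_abs σ, hσ, neg_sq, Real.sq_sqrt (sub_nonneg.2 hk)]
  ring

lemma inner_tipNormal (σ k : ℝ) (p : Plane) :
    ⟪tipNormal σ k, p⟫_ℝ = k * (σ * p 0) - √(1 - k ^ 2) * p 1 := by
  rw [Plane.inner_eq]
  change σ * k * p 0 + -√(1 - k ^ 2) * p 1 = _
  ring

lemma Plane.convex_setOf_apply_le {f : ℝ → ℝ} (hf : ConvexOn ℝ univ f) :
    Convex ℝ {p : Plane | f (p 0) ≤ p 1} := by
  intro p hp q hq α β hα hβ hαβ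
  exact (hf.2 (mem_univ _) (mem_univ _) hα hβ hαβ).trans
    (add_le_add (mul_le_mul_of_nonneg_left hp hα) (mul_le_mul_of_nonneg_left hq hβ))

lemma exists_abs_eq_one_mul_eq_abs (x : ℝ) : ∃ σ : ℝ, |σ| = 1 ∧ σ * x = |x| := by
  rcases abs_choice x with h | h
  · exact ⟨1, abs_one, by rw [h, one_mul]⟩
  · exact ⟨-1, by simp, by rw [h, neg_one_mul]⟩

namespace NotchedChamber

variable (N : NotchedChamber) {p q : Plane} {σ k x : ℝ}

lemma c_sq_le_one : N.c ^ 2 ≤ 1 := by linarith [N.one_sub_c_sq_pos]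

lemma le_ceiling (hσ : |σ| = 1) (hk : 0 ≤ k) (hkc : k ≤ N.c)
    (hq : k * (1 + N.η) ≤ ⟪tipNormal σ k, q⟫_ℝ) : q 1 ≤ N.ceiling (q 0) := by
  rw [inner_tipNormal] at hq
  have hs : 0 < √(1 - N.c ^ 2) := Real.sqrt_pos.2 N.one_sub_c_sq_pos
  have hsw : √(1 - N.c ^ 2) ≤ √(1 - k ^ 2) := by gcongr
  have hσq : σ * q 0 ≤ |q 0| := (le_abs_self _).trans_eq (by rw [abs_mul, hσ, one_mul])
  have hline : √(1 - k ^ 2) * q 1 ≤ k * (|q 0| - (1 + N.η)) := by nlinarith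
  rcases le_or_gt (q 1) 0 with hneg | hpos
  · exact hneg.trans (N.ceiling_nonneg _)
  · have hfar : 0 < |q 0| - (1 + N.η) := by
      by_contra! hnear
      nlinarith
    refine le_max_of_le_right ?_
    rw [div_mul_eq_mul_div, le_div_iff₀ hs]
    nlinarith

/-- A curve of disc centers that joins the two pockets below the tips, as a graph. Beyond a tip it
follows the unit circle around the tip. -/
def core (x : ℝ) : ℝ := -√(1 - max (|x| - (1 + N.η)) 0 ^ 2)

lemma continuous_core : Continuous N.core := by
  unfold core
  fun_prop

lemma core_nonpos (x : ℝ) : N.core x ≤ 0 := neg_nonpos.2 (Real.sqrt_nonneg _)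

lemma norm_graphPoint_core_le (hx : |x| ≤ 1 + N.η + N.c) :
    ‖Plane.graphPoint N.core x‖ ≤ pocketRadius N.c N.η := by
  have hη := N.η_pos
  have hc := N.c_pos
  set k := max (|x| - (1 + N.η)) 0
  have hk0 : 0 ≤ k := le_max_right _ _
  have hkc : k ≤ N.c := max_le (by linarith) hc.le
  have hxk : |x| ≤ 1 + N.η + k := by linarith [le_max_left (|x| - (1 + N.η)) 0]
  refine Real.le_sqrt_of_sq_le ?_
  rw [Plane.norm_sq_eq]
  change x ^ 2 + (-√(1 - k ^ 2)) ^ 2 ≤ _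
  rw [neg_sq, Real.sq_sqrt (by nlinarith [N.c_sq_le_one]), ← sq_abs]
  nlinarith [abs_nonneg x]

lemma graphPoint_core_mem_freeSpace (hx : |x| ≤ 1 + N.η + N.c) :
    Plane.graphPoint N.core x ∈ N.freeSpace := by
  intro q hq
  constructor
  · refine N.floor_le q ?_
    have hdist := mem_ball_iff_norm.1 hq
    linarith [norm_le_norm_add_norm_sub' q (Plane.graphPoint N.core x),
      N.norm_graphPoint_core_le hx]
  · obtain ⟨σ, hσ, hσx⟩ := exists_abs_eq_one_mul_eq_abs x
    set k := max (|x| - (1 + N.η)) 0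
    have hk0 : 0 ≤ k := le_max_right _ _
    have hkc : k ≤ N.c := max_le (by linarith) N.c_pos.le
    have hk1 : k ^ 2 ≤ 1 := (pow_le_pow_left₀ hk0 hkc 2).trans N.c_sq_le_one
    refine N.le_ceiling hσ hk0 hkc
      (ball_subset_setOf_le_inner (norm_tipNormal hσ hk1).le ?_ hq)
    rw [inner_tipNormal]
    change _ ≤ k * (σ * x) - √(1 - k ^ 2) * -√(1 - k ^ 2)
    rw [hσx, mul_neg, Real.mul_self_sqrt (sub_nonneg.2 hk1)]
    rcases max_choice (|x| - (1 + N.η)) 0 with h | h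
    · nlinarith
    · nlinarith

lemma add_one_le_inner_tipNormal (hp : p ∈ N.freeSpace) (hσ : |σ| = 1)
    (hpσ : 1 + N.η + N.c ≤ σ * p 0) : N.c * (1 + N.η) + 1 ≤ ⟪tipNormal σ N.c, p⟫_ℝ := by
  have hs2 : √(1 - N.c ^ 2) ^ 2 = 1 - N.c ^ 2 := Real.sq_sqrt N.one_sub_c_sq_pos.le
  have hs : 0 < √(1 - N.c ^ 2) := Real.sqrt_pos.2 N.one_sub_c_sq_pos
  have hball : p - tipNormal σ N.c ∈ closedBall p 1 := by
    rw [mem_closedBall_iff_norm', sub_sub_cancel, norm_tipNormal hσ N.c_sq_le_one]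
  have hceil : p 1 - -√(1 - N.c ^ 2) ≤ N.ceiling (p 0 - σ * N.c) :=
    (N.closedBall_subset_region hp hball).2
  have habs : |p 0 - σ * N.c| = σ * p 0 - N.c := by
    have hσσ : σ * σ = 1 := by rw [← abs_mul_abs_self, hσ, one_mul]
    rw [← one_mul |_|, ← hσ, ← abs_mul, mul_sub, ← mul_assoc, hσσ, one_mul]
    exact abs_of_nonneg (by linarith [N.η_pos])
  rw [N.ceiling_of_le_abs (by linarith), habs, div_mul_eq_mul_div, le_div_iff₀ hs] at hceil
  rw [inner_tipNormal]
  linarith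

lemma segment_subset_freeSpace_of_apply_zero_eq (hp : p ∈ N.freeSpace) (hq : q ∈ N.freeSpace)
    (hpq : p 0 = q 0) : segment ℝ p q ⊆ N.freeSpace := by
  refine segment_subset_setOf_ball_subset fun v hv => ?_
  have hmem : ∀ {z}, z ∈ N.freeSpace → v + z ∈ N.region := fun hz => hz (by simpa)
  have hvpq : (v + p) 0 = (v + q) 0 := congrArg (v 0 + ·) hpq
  have hconv : Convex ℝ ({z : Plane | z 0 = (v + q) 0} ∩ {z | z 1 ≤ N.ceiling ((v + q) 0)}) :=
    ((convex_singleton _).linear_preimage (EuclideanSpace.proj (𝕜 := ℝ) (0 : Fin 2)).toLinearMap)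
      |>.inter <|
    (convex_Iic _).linear_preimage (EuclideanSpace.proj (𝕜 := ℝ) (1 : Fin 2)).toLinearMap
  have hceil := hconv.segment_subset ⟨hvpq, hvpq ▸ (hmem hp).2⟩ ⟨rfl, (hmem hq).2⟩
  have hfloor := (Plane.convex_setOf_apply_le N.convexOn_floor).segment_subset
    (hmem hp).1 (hmem hq).1
  exact fun z hz => ⟨hfloor hz, (hceil hz).1 ▸ (hceil hz).2⟩

lemma segment_subset_freeSpace_of_le_mul (hp : p ∈ N.freeSpace) (hq : q ∈ N.freeSpace)
    (hσ : |σ| = 1) (hpσ : 1 + N.η + N.c ≤ σ * p 0) (hqσ : 1 + N.η + N.c ≤ σ * q 0) :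
    segment ℝ p q ⊆ N.freeSpace := by
  set A : Set Plane := {z | N.floor (z 0) ≤ z 1} ∩
    {z | N.c * (1 + N.η) ≤ ⟪tipNormal σ N.c, z⟫_ℝ}
  have hA : Convex ℝ A := (Plane.convex_setOf_apply_le N.convexOn_floor).inter <|
    (convex_Ici _).linear_preimage (innerSL ℝ (tipNormal σ N.c)).toLinearMap
  have hAN : A ⊆ N.region := fun z hz => ⟨hz.1, N.le_ceiling hσ N.c_pos.le le_rfl hz.2⟩
  have hmem : ∀ {z v}, z ∈ N.freeSpace → 1 + N.η + N.c ≤ σ * z 0 → ‖v‖ < 1 → v + z ∈ A := by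
    intro z v hz hzσ hv
    have hball : v + z ∈ ball z 1 := by simpa
    exact ⟨(hz hball).1, ball_subset_setOf_le_inner (norm_tipNormal hσ N.c_sq_le_one).le
      (N.add_one_le_inner_tipNormal hz hσ hzσ) hball⟩
  exact segment_subset_setOf_ball_subset fun v hv =>
    (hA.segment_subset (hmem hp hpσ hv) (hmem hq hqσ hv)).trans hAN

lemma exists_segment_core_subset_freeSpace (hp : p ∈ N.freeSpace) :
    ∃ x, |x| ≤ 1 + N.η + N.c ∧ segment ℝ p (Plane.graphPoint N.core x) ⊆ N.freeSpace := by
  have hr : 0 ≤ 1 + N.η + N.c := by linarith [N.η_pos, N.c_pos]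
  rcases le_total |p 0| (1 + N.η + N.c) with hp0 | hp0
  · exact ⟨p 0, hp0, N.segment_subset_freeSpace_of_apply_zero_eq hp
      (N.graphPoint_core_mem_freeSpace hp0) rfl⟩
  · obtain ⟨σ, hσ, hσp⟩ := exists_abs_eq_one_mul_eq_abs (p 0)
    have hσr : |σ * (1 + N.η + N.c)| = 1 + N.η + N.c := by
      rw [abs_mul, hσ, one_mul, abs_of_nonneg hr]
    have hσσ : σ * (σ * (1 + N.η + N.c)) = 1 + N.η + N.c := by
      rw [← mul_assoc, ← abs_mul_abs_self, hσ, one_mul, one_mul]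
    exact ⟨_, hσr.le, N.segment_subset_freeSpace_of_le_mul hp
      (N.graphPoint_core_mem_freeSpace hσr.le) hσ (hp0.trans_eq hσp.symm) hσσ.ge⟩

lemma isConnected_freeSpace : IsConnected N.freeSpace := by
  set Γ : Set Plane := Plane.graphPoint N.core '' {x | |x| ≤ 1 + N.η + N.c}
  have hΓN : Γ ⊆ N.freeSpace := image_subset_iff.2 fun x hx => N.graphPoint_core_mem_freeSpace hx
  have hΓ : IsPreconnected Γ := by
    refine IsPreconnected.image ?_ _ (Plane.continuous_graphPoint N.continuous_core).continuousOn
    simp only [abs_le]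
    exact isPreconnected_Icc
  have h0 : Plane.graphPoint N.core 0 ∈ Γ := by
    refine mem_image_of_mem _ ?_
    rw [mem_ofPred_eq, abs_zero]
    linarith [N.η_pos, N.c_pos]
  refine ⟨⟨_, hΓN h0⟩, isPreconnected_of_forall (Plane.graphPoint N.core 0) fun p hp => ?_⟩
  obtain ⟨x, hx, hseg⟩ := N.exists_segment_core_subset_freeSpace hp
  exact ⟨Γ ∪ segment ℝ p (Plane.graphPoint N.core x), union_subset hΓN hseg, Or.inl h0,
    Or.inr (left_mem_segment ℝ p _), hΓ.union _ (mem_image_of_mem _ hx) (right_mem_segment ℝ p _)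
      (convex_segment p _).isPreconnected⟩

lemma exit_mem_freeSpace : !₂[0, 3] ∈ N.freeSpace := by
  have hη := N.η_pos
  intro q hq
  have hcoord : ∀ i, |q i - (!₂[0, 3] : Plane) i| < 1 := fun i =>
    (PiLp.norm_apply_le (q - !₂[0, 3]) i).trans_lt (mem_ball_iff_norm.1 hq)
  have hq0 : |q 0| < 1 := by simpa using hcoord 0
  have hq1 : |q 1 - 3| < 1 := hcoord 1
  obtain ⟨hlo, hhi⟩ := abs_lt.1 hq1
  refine ⟨?_, le_max_of_le_left ?_⟩
  · linarith [N.floor_le_neg_one (hq0.le.trans (by linarith))]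
  · rw [div_mul_eq_mul_div, le_div_iff₀ hη]
    nlinarith

lemma norm_lt_of_apply_one_nonpos (hp : p ∈ N.freeSpace) (hp1 : p 1 ≤ 0) : ‖p‖ < 2 - N.η := by
  rcases eq_or_ne p 0 with rfl | hp0
  · rw [norm_zero]
    linarith [N.η_lt_one]
  · have hpos : 0 < ‖p‖ := norm_pos_iff.2 hp0
    have hball : p + ‖p‖⁻¹ • p ∈ closedBall p 1 := by
      rw [mem_closedBall_iff_norm, add_sub_cancel_left, norm_smul_of_nonneg (by positivity),
        inv_mul_cancel₀ hpos.ne']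
    have hnorm : ‖p + ‖p‖⁻¹ • p‖ = ‖p‖ + 1 := by
      have hsmul : p + ‖p‖⁻¹ • p = (1 + ‖p‖⁻¹) • p := by rw [add_smul, one_smul]
      rw [hsmul, norm_smul_of_nonneg (by positivity), add_mul, one_mul, inv_mul_cancel₀ hpos.ne']
    have hdown : p 1 + ‖p‖⁻¹ * p 1 ≤ 0 :=
      add_nonpos hp1 (mul_nonpos_of_nonneg_of_nonpos (by positivity) hp1)
    linarith [N.norm_lt _ (N.closedBall_subset_region hp hball).1 hdown]

lemma abs_apply_zero_le (hp : p ∈ N.freeSpace) (hp1 : p 1 = 0) : |p 0| ≤ N.η := by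
  by_contra! hlt
  have hp2 : |p 0| < 2 - N.η :=
    (PiLp.norm_apply_le p 0).trans_lt (N.norm_lt_of_apply_one_nonpos hp hp1.le)
  obtain ⟨σ, hσ, hσp⟩ := exists_abs_eq_one_mul_eq_abs (p 0)
  have hgap : (1 + N.η - |p 0|) ^ 2 < 1 :=
    (sq_lt_one_iff_abs_lt_one _).2 (abs_lt.2 ⟨by linarith [N.η_pos], by linarith⟩)
  set y := √(1 - (1 + N.η - |p 0|) ^ 2)
  have hy : 0 < y := Real.sqrt_pos.2 (sub_pos.2 hgap)
  have hy2 : y ^ 2 = 1 - (1 + N.η - |p 0|) ^ 2 := Real.sq_sqrt (sub_nonneg.2 hgap.le)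
  have hball : !₂[σ * (1 + N.η), y] ∈ closedBall p 1 := by
    have hσ2 : σ ^ 2 = 1 := by rw [← sq_abs, hσ, one_pow]
    rw [mem_closedBall_iff_norm, ← sq_le_one_iff₀ (norm_nonneg _), Plane.norm_sq_eq]
    change (σ * (1 + N.η) - p 0) ^ 2 + (y - p 1) ^ 2 ≤ 1
    rw [hp1, sub_zero, hy2, ← hσp]
    refine le_of_eq ?_
    linear_combination ((1 + N.η) ^ 2 - p 0 ^ 2) * hσ2
  have htip : |σ * (1 + N.η)| = 1 + N.η := by
    rw [abs_mul, hσ, one_mul, abs_of_pos (by linarith [N.η_pos])]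
  have hceil : y ≤ N.ceiling (σ * (1 + N.η)) := (N.closedBall_subset_region hp hball).2
  rw [N.ceiling_of_le_abs htip.ge, htip, sub_self, mul_zero] at hceil
  exact hceil.not_gt hy

lemma dist_lt_two (hp : p ∈ N.freeSpace) (hq : q ∈ N.freeSpace) (hp1 : p 1 = 0) (hq1 : q 1 ≤ 0) :
    dist p q < 2 := by
  have hp_norm : ‖p‖ ≤ N.η := by
    refine le_of_eq_of_le ?_ (N.abs_apply_zero_le hp hp1)
    simp [EuclideanSpace.norm_eq, hp1, Real.sqrt_sq_eq_abs]
  linarith [dist_le_norm_add_norm p q, N.norm_lt_of_apply_one_nonpos hq hq1]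

end NotchedChamber

/-! ### Chambers with pockets at distance nearly four -/

lemma one_add_pocketRadius_lt {c : ℝ} (hc : 0 < c) (hc1 : c < 1) :
    1 + pocketRadius c ((1 - c) / 8) < 3 - (1 - c) / 8 := by
  have hsqrt : pocketRadius c ((1 - c) / 8) < 2 - (1 - c) / 8 := by
    refine (Real.sqrt_lt' (by linarith)).2 ?_
    nlinarith
  linarith

lemma Plane.norm_abs_apply_zero (p : Plane) : ‖(!₂[|p 0|, p 1] : Plane)‖ = ‖p‖ := by
  rw [← sq_eq_sq₀ (norm_nonneg _) (norm_nonneg _), norm_sq_eq, norm_sq_eq p]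
  change |p 0| ^ 2 + p 1 ^ 2 = _
  rw [sq_abs]

lemma exists_notchedChamber {c : ℝ} (hc : 0 < c) (hc1 : c < 1) :
    ∃ N : NotchedChamber, N.c = c := by
  have hη : 0 < (1 - c) / 8 := by linarith
  have hη1 : (1 - c) / 8 < 1 := by linarith
  set η := (1 - c) / 8
  set K := c / √(1 - c ^ 2)
  have hR : 0 ≤ pocketRadius c η := Real.sqrt_nonneg _
  obtain ⟨φ, hφ, hconv, hmono, hle, hlt, C, hgrow⟩ := exists_circular_floor (K := K + 1)
    (by linarith) (one_add_pocketRadius_lt hc hc1) (by positivity)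
  set d := 2 + η + |C|
  have hd : 1 + η < d := by linarith [abs_nonneg C]
  have hgrow_d : K * (d - (1 + η)) ≤ φ |d| := by
    have hK : 0 ≤ K := by positivity
    rw [abs_of_pos (by positivity)]
    nlinarith [hgrow d, le_abs_self C]
  exact ⟨
    { c := c
      η := η
      c_pos := hc
      c_lt_one := hc1
      η_pos := hη
      η_lt_one := hη1
      floor := fun x => φ |x|
      isPiecewiseAffine_floor := hφ.comp_abs
      convexOn_floor := convexOn_comp_abs hconv hmono
      floor_abs := fun x => by rw [abs_abs]
      floor_le := fun p hp => hle !₂[|p 0|, p 1] (p.norm_abs_apply_zero.trans_le hp.le)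
      norm_lt := fun p hp hp1 =>
        p.norm_abs_apply_zero.symm.trans_lt (hlt !₂[|p 0|, p 1] (abs_nonneg _) hp hp1)
      exists_le_floor := ⟨d, hd, hgrow_d⟩ }, rfl⟩

namespace NotchedChamber

variable (N : NotchedChamber)

/-- The start position in the right (`σ = 1`) or left (`σ = -1`) pocket. -/
def pocketPoint (σ : ℝ) : Plane := Plane.graphPoint N.core (σ * (1 + N.η + N.c))

lemma pocketPoint_mem_freeSpace {σ : ℝ} (hσ : |σ| = 1) : N.pocketPoint σ ∈ N.freeSpace := by
  refine N.graphPoint_core_mem_freeSpace ?_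
  rw [abs_mul, hσ, one_mul, abs_of_nonneg (by linarith [N.η_pos, N.c_pos])]

lemma two_mul_le_dist_pocketPoint :
    2 * (1 + N.c) ≤ dist (N.pocketPoint 1) (N.pocketPoint (-1)) := by
  rw [dist_eq_norm]
  refine le_trans ?_ ((le_abs_self _).trans
    (PiLp.norm_apply_le (N.pocketPoint 1 - N.pocketPoint (-1)) 0))
  change _ ≤ 1 * (1 + N.η + N.c) - -1 * (1 + N.η + N.c)
  linarith [N.η_pos]

lemma four_le_dist_exit_core_zero : 4 ≤ dist !₂[0, 3] (Plane.graphPoint N.core 0) := by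
  have hcore : N.core 0 = -1 := by
    rw [core, max_eq_right (by rw [abs_zero]; linarith [N.η_pos])]
    norm_num
  rw [dist_eq_norm]
  refine le_trans ?_ ((le_abs_self _).trans
    (PiLp.norm_apply_le (!₂[0, 3] - Plane.graphPoint N.core 0) 1))
  change 4 ≤ 3 - N.core 0
  rw [hcore]
  norm_num

end NotchedChamber

/-! ### Blocked motion plans -/

/-- Consider a time at which the maximal value of `h` on the centers is `0`. -/
lemma not_isValidMotionPlan_of_gate {F S T : Set Plane} {m : ℕ} (hm : 2 ≤ m) {h : Plane → ℝ}
    (hh : Continuous h) (hgate : ∀ p ∈ F, ∀ q ∈ F, h p = 0 → h q ≤ 0 → dist p q < 2)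
    (hS : ∀ s ∈ S, h s ≤ 0) (hT : ∃ t ∈ T, 0 ≤ h t) (π : Fin m → unitInterval → Plane) :
    ¬ IsValidMotionPlan F S T π := by
  rintro ⟨hcont, hF, hstart, hend, hdist⟩
  have : Nontrivial (Fin m) := Fin.nontrivial_iff_two_le.2 hm
  let height : unitInterval → ℝ := fun τ => Finset.univ.sup' Finset.univ_nonempty fun i => h (π i τ)
  have hheight : Continuous height :=
    Continuous.finset_sup'_apply _ fun i _ => hh.comp (hcont i)
  have h0 : height 0 ≤ 0 :=
    Finset.sup'_le _ _ fun i _ => hS _ (hstart.mapsTo (mem_univ i))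
  have h1 : 0 ≤ height 1 := by
    obtain ⟨t, ht, hht⟩ := hT
    obtain ⟨i, rfl⟩ := hend.symm ▸ ht
    exact hht.trans (Finset.le_sup' (fun i => h (π i 1)) (Finset.mem_univ i))
  obtain ⟨τ, hτ⟩ := intermediate_value_univ 0 1 hheight ⟨h0, h1⟩
  obtain ⟨i, -, hi⟩ :=
    Finset.exists_mem_eq_sup' Finset.univ_nonempty fun i => h (π i τ)
  obtain ⟨j, hji⟩ := exists_ne i
  have hj : h (π j τ) ≤ 0 :=
    (Finset.le_sup' (fun i => h (π i τ)) (Finset.mem_univ j)).trans_eq hτ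
  exact (hgate _ (hF i τ) _ (hF j τ) (hi.symm.trans hτ) hj).not_ge (hdist τ i j hji.symm)

/-- Monochromatic separation strictly less than 4 does not always guarantee a solution,
even when the free space is a single connected component containing two start and two
target positions. -/
theorem monochromatic_lower_bound :
    ∀ ε : ℝ, 0 < ε →
      ∃ (P : SimplePolygon) (s₁ s₂ t₁ t₂ : Plane),
        IsConnected P.freeSpace ∧
        s₁ ∈ P.freeSpace ∧ s₂ ∈ P.freeSpace ∧ t₁ ∈ P.freeSpace ∧ t₂ ∈ P.freeSpace ∧
        s₁ ≠ s₂ ∧ t₁ ≠ t₂ ∧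
        4 - ε ≤ dist s₁ s₂ ∧ 4 - ε ≤ dist t₁ t₂ ∧
        ¬ ∃ π : Fin 2 → unitInterval → Plane,
            IsValidMotionPlan P.freeSpace ({s₁, s₂} : Set Plane) ({t₁, t₂} : Set Plane) π := by
  intro ε hε
  have hmin : 0 < min ε (1 / 2) := lt_min hε one_half_pos
  obtain ⟨N, hNc⟩ := exists_notchedChamber (c := 1 - min ε (1 / 2) / 2)
    (by linarith [min_le_right ε (1 / 2)]) (by linarith)
  obtain ⟨P, hP⟩ := N.exists_simplePolygon
  have hPN : P.freeSpace = N.freeSpace := by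
    rw [SimplePolygon.freeSpace, hP, NotchedChamber.freeSpace]
  have hcore : Plane.graphPoint N.core 0 ∈ N.freeSpace :=
    N.graphPoint_core_mem_freeSpace (abs_zero.trans_le (by linarith [N.η_pos, N.c_pos]))
  have hs := N.two_mul_le_dist_pocketPoint
  have ht := N.four_le_dist_exit_core_zero
  refine ⟨P, N.pocketPoint 1, N.pocketPoint (-1), !₂[0, 3], Plane.graphPoint N.core 0, ?_⟩
  rw [hPN]
  refine ⟨N.isConnected_freeSpace, N.pocketPoint_mem_freeSpace (by simp),
    N.pocketPoint_mem_freeSpace (by simp), N.exit_mem_freeSpace, hcore,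
    dist_pos.1 (by linarith [N.c_pos]), dist_pos.1 (by linarith),
    by linarith [min_le_left ε (1 / 2)], by linarith, fun ⟨π, hπ⟩ => ?_⟩
  refine not_isValidMotionPlan_of_gate le_rfl (h := fun p => p 1) (by fun_prop)
    (fun p hp q hq => N.dist_lt_two hp hq) ?_ ⟨_, mem_insert _ _, zero_le_three⟩ π hπ
  rintro s (rfl | rfl) <;> exact N.core_nonpos _
end
end

section
/- For every blocker x ∈ T and every blocking area b_x of x, there exists a continuous path π : [0,1] → F with π(0) = x and π(1) ∈ b_x whose image is contained in D₂(x), and whose image is disjoint from every blocking area b_y of every blocker y ∈ T with y ≠ x. -/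
open Metric Set

noncomputable section

/-- `D₂⁻(t)`: the part of the free space `F` inside the aura of the target `t`, minus the
auras of the start positions in `S`. -/
def minusAura (F S : Set Plane) (t : Plane) : Set Plane :=
  (Metric.ball t 2 ∩ F) \ ⋃ s ∈ S, Metric.ball s 2

/-- A remote component of a target `t`: a connected component of `D₂⁻(t)` not containing `t`. -/
def RemoteComponent (F S : Set Plane) (t : Plane) (b : Set Plane) : Prop :=
  (∃ p ∈ minusAura F S t, b = connectedComponentIn (minusAura F S t) p) ∧ t ∉ b

/-- A blocking area of a target `t`: a remote component `b` of `t` such that `F \ b` is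
disconnected. A target having a blocking area is called a blocker. -/
def BlockingArea (F S : Set Plane) (t : Plane) (b : Set Plane) : Prop :=
  RemoteComponent F S t b ∧ ¬ IsPreconnected (F \ b)

/-- The union of all remote components of all targets in `T`. -/
def remoteUnion (F S T : Set Plane) : Set Plane :=
  {x | ∃ t ∈ T, ∃ b : Set Plane, RemoteComponent F S t b ∧ x ∈ b}

/-!
Write `U` for the exterior of the polygon, so that the free space is the complement of the
`1`-thickening of `U`, and let `x`, `v` be free points at distance less than `2`. Put the segment
`x v` on the real axis and consider the vertical lines meeting it. If on one of these lines the
points of `U` above the axis and those below the axis both obstructed a common point, then a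
polyline from `U` to `U` inside the thickening would cross the segment; closed up through `U`, it
would separate `x` from `v`, contradicting the connectedness of the free space. So on each line at
least one side obstructs nothing, and pushing each point of the segment away from the obstructing
side, just far enough to be free, gives the graph of a continuous function. This graph stays in the
closed disc with diameter `x v`: a unit circle whose open disc contains neither `x` nor `v` can only
bulge through the segment by an arc flatter than the boundary of that disc. For `v` in a remote
component of `x`, this disc lies in the aura of `x`, which is disjoint from the auras of the other
targets.
-/

section LogRatio

variable {L M : ℂ → ℂ} {p q w z u : ℂ} {J K : Set ℂ}

/-- `L` is a continuous branch on `K` of the multivalued function `log ((z - p) / (z - q))`.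
Since `exp` never vanishes and division by zero gives zero, `K` contains neither `p` nor `q`. -/
structure IsLogRatioOn (L : ℂ → ℂ) (p q : ℂ) (K : Set ℂ) : Prop where
  continuousOn : ContinuousOn L K
  exp_eq : ∀ z ∈ K, Complex.exp (L z) = (z - p) / (z - q)

namespace IsLogRatioOn

lemma mono (hL : IsLogRatioOn L p q K) (h : J ⊆ K) : IsLogRatioOn L p q J :=
  ⟨hL.continuousOn.mono h, fun z hz => hL.exp_eq z (h hz)⟩

lemma sub_right_ne_zero (hL : IsLogRatioOn L p q K) (hz : z ∈ K) : z - q ≠ 0 := fun h =>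
  Complex.exp_ne_zero (L z) (by rw [hL.exp_eq z hz, h, div_zero])

lemma neg (hL : IsLogRatioOn L p q K) : IsLogRatioOn (-L) q p K where
  continuousOn := hL.continuousOn.neg
  exp_eq z hz := by rw [Pi.neg_apply, Complex.exp_neg, hL.exp_eq z hz, inv_div]

lemma add (hL : IsLogRatioOn L p w K) (hM : IsLogRatioOn M w q K) :
    IsLogRatioOn (L + M) p q K where
  continuousOn := hL.continuousOn.add hM.continuousOn
  exp_eq z hz := by
    rw [Pi.add_apply, Complex.exp_add, hL.exp_eq z hz, hM.exp_eq z hz,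
      div_mul_div_cancel₀ (hL.sub_right_ne_zero hz)]

lemma sub_eq_sub (hL : IsLogRatioOn L p q K) (hM : IsLogRatioOn M p q K) (hK : IsPreconnected K)
    {x v : ℂ} (hx : x ∈ K) (hv : v ∈ K) : L v - L x = M v - M x := by
  have hexp : Complex.exp (L x - M x) = 1 := by
    rw [Complex.exp_sub, hL.exp_eq x hx, ← hM.exp_eq x hx, div_self (Complex.exp_ne_zero _)]
  have hLM : K.EqOn L (M + fun _ => L x - M x) :=
    Complex.isCoveringMap_exp.eqOn_of_comp_eqOn hK hL.continuousOn
      (hM.continuousOn.add continuousOn_const)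
      (fun z hz => Subtype.ext <| by
        simp only [Function.comp_apply, Pi.add_apply, Complex.exp_add, hexp, mul_one,
          hL.exp_eq z hz, hM.exp_eq z hz])
      hx (by simp only [Pi.add_apply, add_sub_cancel])
  rw [hLM hv, Pi.add_apply]
  ring

end IsLogRatioOn

open scoped ComplexOrder in
lemma sub_div_sub_mem_slitPlane_iff :
    (z - p) / (z - q) ∈ Complex.slitPlane ↔ z ∉ segment ℝ p q := by
  rw [Complex.mem_slitPlane_iff_not_le_zero, mem_segment_iff_sameRay,
    Complex.sameRay_iff_arg_div_eq_zero, Complex.arg_eq_zero_iff_zero_le, ← neg_sub z q, div_neg,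
    neg_nonneg]

lemma isLogRatioOn_compl_segment (p q : ℂ) :
    IsLogRatioOn (fun z => Complex.log ((z - p) / (z - q))) p q (segment ℝ p q)ᶜ where
  continuousOn := by
    refine ContinuousOn.clog (ContinuousOn.div (by fun_prop) (by fun_prop) fun z hz h => ?_)
      fun z hz => sub_div_sub_mem_slitPlane_iff.2 hz
    exact hz (sub_eq_zero.1 h ▸ right_mem_segment ℝ p q)
  exp_eq z hz :=
    Complex.exp_log (Complex.slitPlane_ne_zero (sub_div_sub_mem_slitPlane_iff.2 hz))

lemma exists_isLogRatioOn_compl {U : Set ℂ} (hU : IsOpen U) (hUc : IsPreconnected U)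
    (hp : p ∈ U) (hq : q ∈ U) : ∃ L, IsLogRatioOn L p q Uᶜ := by
  refine hUc.induction₂ (fun p q => ∃ L, IsLogRatioOn L p q Uᶜ) (fun c hc => ?_)
    (fun _ _ _ _ _ _ ⟨L, hL⟩ ⟨M, hM⟩ => ⟨L + M, hL.add hM⟩)
    (fun _ _ _ _ ⟨L, hL⟩ => ⟨-L, hL.neg⟩) hp hq
  obtain ⟨r, hr, hball⟩ := Metric.isOpen_iff.1 hU c hc
  filter_upwards [mem_nhdsWithin_of_mem_nhds (ball_mem_nhds c hr)] with d hd
  have hseg : segment ℝ c d ⊆ U :=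
    ((convex_ball c r).segment_subset (mem_ball_self hr) hd).trans hball
  exact ⟨_, (isLogRatioOn_compl_segment c d).mono (compl_subset_compl.2 hseg)⟩

lemma isLogRatioOn_log_sub_log (hp : ∀ z ∈ K, z - p ∈ Complex.slitPlane)
    (hq : ∀ z ∈ K, z - q ∈ Complex.slitPlane) :
    IsLogRatioOn (fun z => Complex.log (z - p) - Complex.log (z - q)) p q K where
  continuousOn := (ContinuousOn.clog (by fun_prop) hp).sub (ContinuousOn.clog (by fun_prop) hq)
  exp_eq z hz := by
    rw [Complex.exp_sub, Complex.exp_log (Complex.slitPlane_ne_zero (hp z hz)),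
      Complex.exp_log (Complex.slitPlane_ne_zero (hq z hz))]

lemma log_div_eq_log_sub_log (hu : u ≠ 0) (hw : w ∈ Complex.slitPlane)
    (h : u.arg - w.arg ∈ Ioc (-Real.pi) Real.pi) :
    Complex.log (u / w) = Complex.log u - Complex.log w := by
  have hw_arg := Complex.slitPlane_arg_ne_pi hw
  rw [div_eq_mul_inv, (Complex.log_mul_eq_add_log_iff hu
    (inv_ne_zero (Complex.slitPlane_ne_zero hw))).2, Complex.log_inv _ hw_arg, sub_eq_add_neg]
  rwa [Complex.arg_inv, if_neg hw_arg]

lemma log_div_of_im_nonneg_of_im_pos (hu : u ≠ 0) (hu_im : 0 ≤ u.im) (hw_im : 0 < w.im) :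
    Complex.log (u / w) = Complex.log u - Complex.log w := by
  have hw : w ∈ Complex.slitPlane := Or.inr hw_im.ne'
  have hu_arg := Complex.arg_nonneg_iff.2 hu_im
  have hw_arg := Complex.arg_nonneg_iff.2 hw_im.le
  have hw_arg_lt := Complex.arg_lt_pi_iff.2 (Or.inr hw_im.ne')
  exact log_div_eq_log_sub_log hu hw ⟨by linarith, by linarith [u.arg_le_pi]⟩

lemma log_div_of_re_pos (hu : 0 < u.re) (hw : 0 < w.re) :
    Complex.log (u / w) = Complex.log u - Complex.log w := by
  have hu_arg := abs_lt.1 (Complex.abs_arg_lt_pi_div_two_iff.2 (Or.inl hu))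
  have hw_arg := abs_lt.1 (Complex.abs_arg_lt_pi_div_two_iff.2 (Or.inl hw))
  exact log_div_eq_log_sub_log (Complex.slitPlane_ne_zero (Or.inl hu)) (Or.inl hw)
    ⟨by linarith, by linarith⟩

lemma log_div_of_re_neg (hu : u.re < 0) (hu_im : u.im < 0) (hw : w.re < 0) (hw_im : 0 ≤ w.im) :
    Complex.log (u / w) = Complex.log u - Complex.log w + 2 * Real.pi * Complex.I := by
  have hu_arg : (-u).arg = u.arg + Real.pi := Complex.arg_neg_eq_arg_add_pi_iff.2 (Or.inl hu_im)
  have hw_arg : (-w).arg = w.arg - Real.pi :=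
    Complex.arg_neg_eq_arg_sub_pi_iff.2 (hw_im.lt_or_eq.imp_right fun h => ⟨h.symm, hw⟩)
  rw [← neg_div_neg_eq, log_div_of_re_pos (by simpa using hu) (by simpa using hw), Complex.log,
    Complex.log, Complex.log, Complex.log, norm_neg, norm_neg, hu_arg, hw_arg]
  push_cast
  ring

/-- The argument principle for the closed curve that runs through `U` from `q` to `p` and then
along the polyline `p w q`: going from `x` to `v` along `F`, a branch of `log ((z - p) / (z - q))`
can be cut along the polyline, and along the real axis it can be cut along vertical rays; the two
increments differ by `2πi`. -/
lemma inter_polyline_nonempty_of_isPreconnected {U F : Set ℂ} {x v : ℝ} (hF : IsPreconnected F)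
    (hU : IsOpen U) (hUc : IsPreconnected U) (hFU : F ⊆ Uᶜ)
    (hxvU : Complex.ofReal '' Icc x v ⊆ Uᶜ) (hx : (x : ℂ) ∈ F) (hv : (v : ℂ) ∈ F)
    (hp : p ∈ U) (hq : q ∈ U) (hp_im : 0 < p.im) (hw_im : w.im ≤ 0) (hq_im : q.im < 0)
    (hp_re : p.re ∈ Ioo x v) (hw_re : w.re ∈ Ioo x v) :
    (F ∩ (segment ℝ p w ∪ segment ℝ w q)).Nonempty := by
  by_contra! hdisj
  have hF_compl : F ⊆ (segment ℝ p w)ᶜ ∩ (segment ℝ w q)ᶜ := by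
    rw [← compl_union]
    exact (disjoint_iff_inter_eq_empty.2 hdisj).subset_compl_right
  obtain ⟨L, hL⟩ := exists_isLogRatioOn_compl hU hUc hp hq
  have hLF := (hL.mono hFU).sub_eq_sub
    (((isLogRatioOn_compl_segment p w).mono (hF_compl.trans inter_subset_left)).add
      ((isLogRatioOn_compl_segment w q).mono (hF_compl.trans inter_subset_right))) hF hx hv
  have hxv : x ≤ v := (hp_re.1.trans hp_re.2).le
  have hLxv := (hL.mono hxvU).sub_eq_sub
    (isLogRatioOn_log_sub_log (p := p) (q := q)
      (forall_mem_image.2 fun t _ => Or.inr (by simpa using hp_im.ne'))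
      (forall_mem_image.2 fun t _ => Or.inr (by simpa using hq_im.ne)))
    (isPreconnected_Icc.image _ Complex.continuous_ofReal.continuousOn)
    (mem_image_of_mem _ (left_mem_Icc.2 hxv)) (mem_image_of_mem _ (right_mem_Icc.2 hxv))
  have hwq (t : ℝ) (ht : t ≠ w.re) : Complex.log ((t - w) / (t - q)) =
      Complex.log (t - w) - Complex.log (t - q) :=
    log_div_of_im_nonneg_of_im_pos
      (fun h => ht (by simpa [sub_eq_zero] using congrArg Complex.re h))
      (by simpa using hw_im) (by simpa using hq_im)
  have hpw_right : Complex.log ((v - p) / (v - w)) = Complex.log (v - p) - Complex.log (v - w) :=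
    log_div_of_re_pos (by simpa using hp_re.2) (by simpa using hw_re.2)
  have hpw_left : Complex.log ((x - p) / (x - w)) =
      Complex.log (x - p) - Complex.log (x - w) + 2 * Real.pi * Complex.I :=
    log_div_of_re_neg (by simpa using hp_re.1) (by simpa using hp_im) (by simpa using hw_re.1)
      (by simpa using hw_im)
  have hsub := hLF.symm.trans hLxv
  simp only [Pi.add_apply, hwq v hw_re.2.ne', hwq x hw_re.1.ne, hpw_right, hpw_left] at hsub
  exact Complex.two_pi_I_ne_zero (by linear_combination -hsub)

end LogRatio

section Thickening

lemma preimage_thickening_isometryEquiv {X Y : Type*} [PseudoMetricSpace X] [PseudoMetricSpace Y]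
    (e : X ≃ᵢ Y) (δ : ℝ) (U : Set Y) : e ⁻¹' thickening δ U = thickening δ (e ⁻¹' U) := by
  ext z
  simp only [mem_preimage, mem_thickening_iff, e.surjective.exists, e.dist_eq]

lemma isPreconnected_compl_thickening_preimage {X Y : Type*} [PseudoMetricSpace X]
    [PseudoMetricSpace Y] (e : X ≃ᵢ Y) {δ : ℝ} {U : Set Y} :
    IsPreconnected (thickening δ (e ⁻¹' U))ᶜ ↔ IsPreconnected (thickening δ U)ᶜ := by
  rw [← preimage_thickening_isometryEquiv, ← preimage_compl]
  exact e.toHomeomorph.isPreconnected_preimage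

lemma thickening_conj_preimage (δ : ℝ) (U : Set ℂ) :
    starRingEnd ℂ ⁻¹' thickening δ U = thickening δ (starRingEnd ℂ ⁻¹' U) :=
  preimage_thickening_isometryEquiv Complex.conjLIE.toIsometryEquiv δ U

lemma mk_mem_thickening_iff {δ : ℝ} (hδ : 0 < δ) {U : Set ℂ} {t c : ℝ} :
    (⟨t, c⟩ : ℂ) ∈ thickening δ U ↔ ∃ u ∈ U, (t - u.re) ^ 2 + (c - u.im) ^ 2 < δ ^ 2 := by
  simp only [mem_thickening_iff, Complex.dist_eq_re_im, Real.sqrt_lt' hδ]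

end Thickening

/-- The part of a plane set lying strictly above the real axis; the part strictly below is
treated by applying this to the complex conjugate of the set. -/
def upperPart (U : Set ℂ) : Set ℂ := {u ∈ U | 0 < u.im}

/-- A connected open obstacle `U` whose `δ`-thickening has connected complement, normalised so
that two points of that complement at distance less than `2 * δ` sit at `-a` and `a`. -/
structure IsCorridor (U : Set ℂ) (δ a : ℝ) : Prop where
  isOpen : IsOpen U
  isPreconnected : IsPreconnected U
  isPreconnected_compl_thickening : IsPreconnected (thickening δ U)ᶜ
  pos : 0 < a
  lt : a < δ
  left_notMem : ((-a : ℝ) : ℂ) ∉ thickening δ U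
  right_notMem : (a : ℂ) ∉ thickening δ U

namespace IsCorridor

variable {U : Set ℂ} {δ a t c : ℝ}

lemma radius_pos (h : IsCorridor U δ a) : 0 < δ := h.pos.trans h.lt

lemma conj (h : IsCorridor U δ a) : IsCorridor (starRingEnd ℂ ⁻¹' U) δ a := by
  have hconj (s : ℝ) :
      (s : ℂ) ∈ thickening δ (starRingEnd ℂ ⁻¹' U) ↔ (s : ℂ) ∈ thickening δ U := by
    rw [← thickening_conj_preimage, mem_preimage, Complex.conj_ofReal]
  exact ⟨h.isOpen.preimage Complex.continuous_conj,
    Complex.conjLIE.toHomeomorph.isPreconnected_preimage.2 h.isPreconnected,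
    (isPreconnected_compl_thickening_preimage Complex.conjLIE.toIsometryEquiv).2
      h.isPreconnected_compl_thickening,
    h.pos, h.lt, mt (hconj _).1 h.left_notMem, mt (hconj _).1 h.right_notMem⟩

lemma sq_le_of_mem (h : IsCorridor U δ a) {u : ℂ} (hu : u ∈ U) :
    δ ^ 2 ≤ (u.re + a) ^ 2 + u.im ^ 2 ∧ δ ^ 2 ≤ (u.re - a) ^ 2 + u.im ^ 2 := by
  have hl := mt (mk_mem_thickening_iff h.radius_pos).2 h.left_notMem
  have hr := mt (mk_mem_thickening_iff h.radius_pos).2 h.right_notMem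
  push Not at hl hr
  constructor
  · linarith [hl u hu]
  · linarith [hr u hu]

lemma sq_le_of_im_eq_zero (h : IsCorridor U δ a) {u : ℂ} (hu : u ∈ U) (him : u.im = 0)
    (ht : t ∈ Icc (-a) a) : δ ^ 2 ≤ (t - u.re) ^ 2 := by
  obtain ⟨hl, hr⟩ := h.sq_le_of_mem hu
  rw [him, zero_pow two_ne_zero, add_zero, sq_le_sq, abs_of_pos h.radius_pos, le_abs] at hl hr
  rw [sq_le_sq, abs_of_pos h.radius_pos, le_abs]
  have := h.lt
  obtain ⟨ht1, ht2⟩ := ht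
  rcases hl with hl | hl <;> rcases hr with hr | hr <;> [right; skip; skip; left] <;> linarith

lemma ofReal_notMem (h : IsCorridor U δ a) (ht : t ∈ Icc (-a) a) : (t : ℂ) ∉ U := fun hU => by
  have := h.sq_le_of_im_eq_zero hU (Complex.ofReal_im t) ht
  rw [Complex.ofReal_re, sub_self, zero_pow two_ne_zero] at this
  exact this.not_gt (pow_pos h.radius_pos 2)

lemma re_mem_Ioo_of_upperPart (h : IsCorridor U δ a) {p : ℂ} (hp : p ∈ upperPart U)
    (ht : t ∈ Icc (-a) a) (hc : c ≤ 0) (hpd : (t - p.re) ^ 2 + (c - p.im) ^ 2 < δ ^ 2) :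
    p.re ∈ Ioo (-a) a ∧ t ∈ Ioo (-a) a := by
  have hd : (t - p.re) ^ 2 + p.im ^ 2 < δ ^ 2 := by nlinarith [hp.2]
  obtain ⟨hl, hr⟩ := h.sq_le_of_mem hp.1
  obtain ⟨ht1, ht2⟩ := ht
  refine ⟨⟨by nlinarith, by nlinarith⟩, lt_of_le_of_ne ht1 ?_, lt_of_le_of_ne ht2 ?_⟩ <;>
  · rintro rfl
    nlinarith

/-- Otherwise a two-edge polyline through `t + c * I` would cross the interval `[-a, a]` from `U` to
`U` inside the thickening, separating `-a` from `a`. -/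
lemma notMem_thickening_of_mem_thickening_upperPart (h : IsCorridor U δ a)
    (ht : t ∈ Icc (-a) a) (hc : c ≤ 0)
    (hupper : (⟨t, c⟩ : ℂ) ∈ thickening δ (upperPart U)) :
    (⟨t, c⟩ : ℂ) ∉ thickening δ {u ∈ U | u.im ≤ 0} := by
  rw [mk_mem_thickening_iff h.radius_pos] at hupper ⊢
  obtain ⟨p, hp, hpd⟩ := hupper
  rintro ⟨q, ⟨hq, hq_im⟩, hqd⟩
  obtain ⟨hp_re, ht'⟩ := h.re_mem_Ioo_of_upperPart hp ht hc hpd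
  have hq_im_neg : q.im < 0 := lt_of_le_of_ne hq_im fun h0 => by
    nlinarith [h.sq_le_of_im_eq_zero hq h0 ht, sq_nonneg (c - q.im)]
  have hseg {u : ℂ} (hu : u ∈ U) (hd : (t - u.re) ^ 2 + (c - u.im) ^ 2 < δ ^ 2) :
      segment ℝ u ⟨t, c⟩ ⊆ thickening δ U := by
    refine .trans ?_ (ball_subset_thickening hu δ)
    exact (convex_ball u δ).segment_subset (mem_ball_self h.radius_pos)
      (by rwa [mem_ball, Complex.dist_eq_re_im, Real.sqrt_lt' h.radius_pos])
  obtain ⟨z, hz, hz'⟩ := inter_polyline_nonempty_of_isPreconnected (w := ⟨t, c⟩)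
    h.isPreconnected_compl_thickening h.isOpen h.isPreconnected
    (compl_subset_compl.2 (self_subset_thickening h.radius_pos U))
    (image_subset_iff.2 fun s hs => h.ofReal_notMem hs) h.left_notMem h.right_notMem
    hp.1 hq hp.2 hc hq_im_neg hp_re ht'
  refine hz (hz'.elim (fun hz' => hseg hp.1 hpd hz') fun hz' => hseg hq hqd ?_)
  rwa [segment_symm]

/-- The circle of radius `δ` around a point of `U` above the axis leaves `-a` and `a` outside, and
so cuts the line between them at most between these two points; being wider than the circle with
diameter `[-a, a]`, it stays inside the latter below the axis. -/
lemma notMem_thickening_upperPart (h : IsCorridor U δ a) (htc : t ^ 2 + c ^ 2 = a ^ 2)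
    (hc : c ≤ 0) : (⟨t, c⟩ : ℂ) ∉ thickening δ (upperPart U) := by
  rw [mk_mem_thickening_iff h.radius_pos]
  rintro ⟨p, ⟨hp, hp_im⟩, hpd⟩
  obtain ⟨hl, hr⟩ := h.sq_le_of_mem hp
  obtain ⟨ht1, ht2⟩ := abs_le.1 (abs_le_of_sq_le_sq (by nlinarith) h.pos.le : |t| ≤ a)
  have hl' : 0 ≤ (a - t) * ((p.re + a) ^ 2 + p.im ^ 2 - δ ^ 2) :=
    mul_nonneg (by linarith) (by linarith)
  have hr' : 0 ≤ (a + t) * ((p.re - a) ^ 2 + p.im ^ 2 - δ ^ 2) :=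
    mul_nonneg (by linarith) (by linarith)
  have hsum : 0 ≤ p.re ^ 2 + a ^ 2 + p.im ^ 2 - δ ^ 2 - 2 * p.re * t :=
    nonneg_of_mul_nonneg_right (a := 2 * a) (by linarith) (by linarith [h.pos])
  nlinarith [mul_nonneg (neg_nonneg.2 hc) hp_im.le]

end IsCorridor

section Profile

lemma uniformContinuous_iInf {ι α : Type*} [PseudoMetricSpace α] {f : ι → α → ℝ}
    (hf : UniformEquicontinuous f) (hbdd : ∀ x, BddBelow (range fun i => f i x)) :
    UniformContinuous fun x => ⨅ i, f i x := by
  rcases isEmpty_or_nonempty ι with hι | hι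
  · simpa only [Real.iInf_of_isEmpty] using uniformContinuous_const
  rw [Metric.uniformEquicontinuous_iff] at hf
  rw [Metric.uniformContinuous_iff]
  intro ε hε
  obtain ⟨η, hη, hfη⟩ := hf (ε / 2) (half_pos hε)
  have hle {x y : α} (hxy : dist x y < η) : (⨅ i, f i x) ≤ (⨅ i, f i y) + ε / 2 := by
    rw [← sub_le_iff_le_add]
    refine le_ciInf fun i => ?_
    linarith [ciInf_le (hbdd x) i, (abs_lt.1 (hfη x y hxy i)).2]
  refine ⟨η, hη, fun x y hxy => abs_lt.2 ⟨?_, ?_⟩⟩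
  · linarith [hle ((dist_comm y x).trans_lt hxy)]
  · linarith [hle hxy]

lemma uniformContinuous_sqrt_sq_sub_sq (δ : ℝ) :
    UniformContinuous fun u : ℝ => √(δ ^ 2 - u ^ 2) := by
  refine HasCompactSupport.uniformContinuous_of_continuous
    (.intro (isCompact_Icc (a := -|δ|) (b := |δ|)) fun u hu => ?_) (by fun_prop)
  rw [mem_Icc, ← abs_le, not_le, ← sq_lt_sq] at hu
  exact Real.sqrt_eq_zero_of_nonpos (by linarith)

/-- The height of the highest point of the vertical line `re = t` that is not above the real axis
and avoids the `δ`-thickening of the part of `U` above the axis. A point of `U` farther than `δ`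
from the line contributes its own positive height, and no point at all contributes `0`; neither
affects the minimum with `0`. -/
def profile (δ : ℝ) (U : Set ℂ) (t : ℝ) : ℝ :=
  min 0 (⨅ p : upperPart U, (p.1.im - √(δ ^ 2 - (p.1.re - t) ^ 2)))

variable {δ t c : ℝ} {U : Set ℂ}

lemma bddBelow_range_im_sub_sqrt (δ t : ℝ) (U : Set ℂ) :
    BddBelow (range fun p : upperPart U => p.1.im - √(δ ^ 2 - (p.1.re - t) ^ 2)) := by
  refine ⟨-√(δ ^ 2), forall_mem_range.2 fun p => ?_⟩
  linarith [p.2.2, Real.sqrt_le_sqrt (sub_le_self (δ ^ 2) (sq_nonneg (p.1.re - t)))]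

lemma profile_nonpos (δ : ℝ) (U : Set ℂ) (t : ℝ) : profile δ U t ≤ 0 := min_le_left _ _

lemma profile_lt_iff (hδ : 0 < δ) (hc : c ≤ 0) :
    profile δ U t < c ↔ (⟨t, c⟩ : ℂ) ∈ thickening δ (upperPart U) := by
  rw [profile, min_lt_iff, or_iff_right hc.not_gt]
  rcases isEmpty_or_nonempty (upperPart U) with hU | hU
  · rw [Real.iInf_of_isEmpty, isEmpty_coe_sort.1 hU, thickening_empty]
    exact iff_of_false hc.not_gt (notMem_empty _)
  have hlt (p : upperPart U) : p.1.im - √(δ ^ 2 - (p.1.re - t) ^ 2) < c ↔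
      (t - p.1.re) ^ 2 + (c - p.1.im) ^ 2 < δ ^ 2 := by
    rw [sub_lt_comm, Real.lt_sqrt (by linarith [p.2.2]), lt_sub_iff_add_lt', sub_sq_comm t,
      sub_sq_comm c]
  simp only [ciInf_lt_iff (bddBelow_range_im_sub_sqrt δ t U), mk_mem_thickening_iff hδ, hlt,
    Subtype.exists, exists_prop]

lemma continuous_profile (δ : ℝ) (U : Set ℂ) : Continuous (profile δ U) := by
  refine continuous_const.min (uniformContinuous_iInf ?_ fun t =>
    bddBelow_range_im_sub_sqrt δ t U).continuous
  rw [Metric.uniformEquicontinuous_iff]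
  intro ε hε
  obtain ⟨η, hη, hsqrt⟩ :=
    Metric.uniformContinuous_iff.1 (uniformContinuous_sqrt_sq_sub_sq δ) ε hε
  refine ⟨η, hη, fun s t hst p => ?_⟩
  rw [dist_sub_left]
  exact hsqrt ((dist_sub_left _ _ _).trans_lt hst)

end Profile

namespace IsCorridor

variable {U : Set ℂ} {δ a t : ℝ}

lemma sq_add_sq_profile_le (h : IsCorridor U δ a) (ht : t ∈ Icc (-a) a) :
    t ^ 2 + profile δ U t ^ 2 ≤ a ^ 2 := by
  have hnonneg : 0 ≤ a ^ 2 - t ^ 2 := sub_nonneg.2 (sq_le_sq' ht.1 ht.2)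
  have hle : -√(a ^ 2 - t ^ 2) ≤ profile δ U t := by
    rw [← not_lt, profile_lt_iff h.radius_pos (neg_nonpos.2 (Real.sqrt_nonneg _))]
    refine h.notMem_thickening_upperPart ?_ (neg_nonpos.2 (Real.sqrt_nonneg _))
    rw [neg_sq, Real.sq_sqrt hnonneg, add_sub_cancel]
  have hsq : profile δ U t ^ 2 ≤ √(a ^ 2 - t ^ 2) ^ 2 :=
    sq_le_sq' hle ((profile_nonpos δ U t).trans (Real.sqrt_nonneg _))
  rw [Real.sq_sqrt hnonneg] at hsq
  linarith

lemma profile_eq_zero_of_sq_eq (h : IsCorridor U δ a) (ht : t ^ 2 = a ^ 2) :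
    profile δ U t = 0 := by
  have hle := h.sq_add_sq_profile_le (abs_le.1 (abs_le_of_sq_le_sq ht.le h.pos.le))
  rw [ht, add_le_iff_nonpos_right] at hle
  exact pow_eq_zero_iff two_ne_zero |>.1 (hle.antisymm (sq_nonneg _))

lemma profile_conj_eq_zero_iff (h : IsCorridor U δ a) (ht : t ∈ Icc (-a) a) :
    profile δ (starRingEnd ℂ ⁻¹' U) t = 0 ↔ (⟨t, 0⟩ : ℂ) ∉ thickening δ {u ∈ U | u.im ≤ 0} := by
  rw [← (profile_nonpos _ _ t).not_lt_iff_eq, profile_lt_iff h.radius_pos le_rfl, not_iff_not,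
    mk_mem_thickening_iff h.radius_pos, mk_mem_thickening_iff h.radius_pos,
    Complex.conjLIE.surjective.exists]
  refine exists_congr fun u => ?_
  simp only [upperPart, Complex.conjLIE_apply, mem_ofPred_eq, mem_preimage, Complex.conj_conj,
    Complex.conj_re, Complex.conj_im, zero_sub, neg_neg, neg_pos, neg_sq]
  refine and_congr_left fun hd => and_congr_right fun hu => ⟨le_of_lt, fun him => ?_⟩
  refine him.lt_of_ne fun h0 => ?_
  linarith [h.sq_le_of_im_eq_zero hu h0 ht, sq_nonneg u.im]

lemma profile_eq_zero_or (h : IsCorridor U δ a) (ht : t ∈ Icc (-a) a) :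
    profile δ (starRingEnd ℂ ⁻¹' U) t = 0 ∨ profile δ U t = 0 := by
  rw [h.profile_conj_eq_zero_iff ht, or_iff_not_imp_right]
  intro hne
  exact h.notMem_thickening_of_mem_thickening_upperPart ht le_rfl
    ((profile_lt_iff h.radius_pos le_rfl).1 ((profile_nonpos δ U t).lt_of_ne hne))

lemma mk_profile_notMem_thickening (h : IsCorridor U δ a) (ht : t ∈ Icc (-a) a)
    (hconj : profile δ (starRingEnd ℂ ⁻¹' U) t = 0) :
    (⟨t, profile δ U t⟩ : ℂ) ∉ thickening δ U := by
  have hunion : U = upperPart U ∪ {u ∈ U | u.im ≤ 0} := by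
    ext u
    simp only [upperPart, mem_union, mem_ofPred_eq, ← and_or_left, lt_or_ge, and_true]
  rw [hunion, thickening_union, mem_union, not_or, ← hunion]
  refine ⟨mt (profile_lt_iff h.radius_pos (profile_nonpos δ U t)).2 (lt_irrefl _), fun hlower => ?_⟩
  rcases (profile_nonpos δ U t).lt_or_eq with hneg | hzero
  · have hvert : Continuous fun c : ℝ => (⟨t, c⟩ : ℂ) :=
      Complex.equivRealProdCLM.symm.continuous.comp (Continuous.prodMk_right t)
    have hev := (eventually_lt_nhds hneg).and
      (hvert.continuousAt.eventually (isOpen_thickening.mem_nhds hlower))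
    obtain ⟨c, ⟨hc_neg, hc_lower⟩, hc⟩ :=
      ((hev.filter_mono nhdsWithin_le_nhds).and
        (eventually_mem_nhdsWithin (s := Ioi (profile δ U t)))).exists
    exact h.notMem_thickening_of_mem_thickening_upperPart ht hc_neg.le
      ((profile_lt_iff h.radius_pos hc_neg.le).1 hc) hc_lower
  · rw [hzero] at hlower
    exact (h.profile_conj_eq_zero_iff ht).1 hconj hlower

lemma mk_sub_profile_mem (h : IsCorridor U δ a) (ht : t ∈ Icc (-a) a) :
    (⟨t, profile δ U t - profile δ (starRingEnd ℂ ⁻¹' U) t⟩ : ℂ) ∈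
      (thickening δ U)ᶜ ∩ closedBall 0 a := by
  have hdisc {y : ℝ} (hy : t ^ 2 + y ^ 2 ≤ a ^ 2) : (⟨t, y⟩ : ℂ) ∈ closedBall (0 : ℂ) a := by
    rw [mem_closedBall, Complex.dist_eq_re_im, Real.sqrt_le_left h.pos.le]
    simpa using hy
  rcases h.profile_eq_zero_or ht with hconj | hzero
  · rw [hconj, sub_zero]
    exact ⟨h.mk_profile_notMem_thickening ht hconj, hdisc (h.sq_add_sq_profile_le ht)⟩
  · have hconj_conj : starRingEnd ℂ ⁻¹' (starRingEnd ℂ ⁻¹' U) = U := by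
      simp only [preimage_preimage, Complex.conj_conj, preimage_id']
    have hnotMem := h.conj.mk_profile_notMem_thickening ht (hconj_conj.symm ▸ hzero)
    rw [← thickening_conj_preimage, mem_preimage] at hnotMem
    rw [hzero, zero_sub]
    exact ⟨hnotMem, hdisc ((neg_sq (profile δ (starRingEnd ℂ ⁻¹' U) t)).symm ▸
      h.conj.sq_add_sq_profile_le ht)⟩

lemma joinedIn (h : IsCorridor U δ a) :
    JoinedIn ((thickening δ U)ᶜ ∩ closedBall 0 a) ((-a : ℝ) : ℂ) a := by
  have hcont : Continuous fun t : ℝ =>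
      (⟨t, profile δ U t - profile δ (starRingEnd ℂ ⁻¹' U) t⟩ : ℂ) :=
    Complex.equivRealProdCLM.symm.continuous.comp
      (continuous_id.prodMk ((continuous_profile δ U).sub (continuous_profile δ _)))
  have ha : -a ≤ a := neg_le_self h.pos.le
  have hpath := ((convex_Icc (-a) a).isPathConnected (nonempty_Icc.2 ha)).image hcont
  refine (hpath.joinedIn _ ⟨-a, left_mem_Icc.2 ha, ?_⟩ _ ⟨a, right_mem_Icc.2 ha, ?_⟩).mono
    (image_subset_iff.2 fun t ht => h.mk_sub_profile_mem ht)
  · simp only [h.profile_eq_zero_of_sq_eq (neg_sq a), h.conj.profile_eq_zero_of_sq_eq (neg_sq a),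
      sub_zero]
    rfl
  · simp only [h.profile_eq_zero_of_sq_eq rfl, h.conj.profile_eq_zero_of_sq_eq rfl, sub_zero]
    rfl

end IsCorridor

section EuclideanPlane

variable {E : Type*} [NormedAddCommGroup E] [InnerProductSpace ℝ E]

lemma exists_linearIsometryEquiv_complex_apply_norm (hE : Module.finrank ℝ E = 2) {w : E}
    (hw : w ≠ 0) : ∃ f : ℂ ≃ₗᵢ[ℝ] E, f ‖w‖ = w := by
  have := Module.finite_of_finrank_eq_succ hE
  have horth : Orthonormal ℝ (({0} : Set (Fin 2)).domRestrict fun _ => ‖w‖⁻¹ • w) :=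
    orthonormal_subsingleton_iff.2 fun _ => norm_smul_inv_norm hw
  obtain ⟨b, hb⟩ := horth.exists_orthonormalBasis_extension_of_card_eq
    (hE.trans (Fintype.card_fin 2).symm)
  refine ⟨Complex.isometryOfOrthonormal b, ?_⟩
  rw [Complex.isometryOfOrthonormal_apply, hb 0 rfl, Complex.ofReal_re, Complex.ofReal_im,
    zero_smul, add_zero, smul_inv_smul₀ (norm_ne_zero_iff.2 hw)]

lemma exists_isometryEquiv_complex (hE : Module.finrank ℝ E = 2) {x v : E} (hxv : x ≠ v) :
    ∃ e : ℂ ≃ᵢ E, e (-(dist x v / 2) : ℝ) = x ∧ e (dist x v / 2 : ℝ) = v := by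
  obtain ⟨f, hf⟩ := exists_linearIsometryEquiv_complex_apply_norm hE (sub_ne_zero.2 hxv.symm)
  have hfv : f (dist x v / 2 : ℝ) = (2⁻¹ : ℝ) • (v - x) := by
    rw [dist_comm, dist_eq_norm, div_eq_inv_mul, Complex.ofReal_mul, ← Complex.real_smul, map_smul,
      hf]
  refine ⟨f.toIsometryEquiv.trans (IsometryEquiv.addLeft (midpoint ℝ x v)), ?_, ?_⟩
  · change midpoint ℝ x v + f (-(dist x v / 2) : ℝ) = x
    rw [Complex.ofReal_neg, map_neg, hfv, midpoint_eq_smul_add, invOf_eq_inv]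
    module
  · change midpoint ℝ x v + f (dist x v / 2 : ℝ) = v
    rw [hfv, midpoint_eq_smul_add, invOf_eq_inv]
    module

lemma joinedIn_compl_thickening (hE : Module.finrank ℝ E = 2) {U : Set E} {δ : ℝ} (hU : IsOpen U)
    (hUc : IsPreconnected U) (hUδ : IsPreconnected (thickening δ U)ᶜ) {x v : E}
    (hx : x ∉ thickening δ U) (hv : v ∉ thickening δ U) (hxv : dist x v < 2 * δ) :
    JoinedIn ((thickening δ U)ᶜ ∩ closedBall (midpoint ℝ x v) (dist x v / 2)) x v := by
  rcases eq_or_ne x v with rfl | hne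
  · exact JoinedIn.refl ⟨hx, by simp⟩
  obtain ⟨e, hex, hev⟩ := exists_isometryEquiv_complex hE hne
  have hmem {z : ℂ} : z ∈ thickening δ (e ⁻¹' U) ↔ e z ∈ thickening δ U := by
    rw [← preimage_thickening_isometryEquiv, mem_preimage]
  have hcorridor : IsCorridor (e ⁻¹' U) δ (dist x v / 2) :=
    { isOpen := hU.preimage e.continuous
      isPreconnected := e.toHomeomorph.isPreconnected_preimage.2 hUc
      isPreconnected_compl_thickening := (isPreconnected_compl_thickening_preimage e).2 hUδ
      pos := half_pos (dist_pos.2 hne)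
      lt := by linarith
      left_notMem := by rwa [hmem, hex]
      right_notMem := by rwa [hmem, hev] }
  have hmid : e 0 = midpoint ℝ x v := by
    have := e.map_midpoint ((-(dist x v / 2) : ℝ) : ℂ) ((dist x v / 2 : ℝ) : ℂ)
    rwa [hex, hev, Complex.ofReal_neg, midpoint_neg_self] at this
  have hjoined := hcorridor.joinedIn.map e.continuous
  rw [hex, hev] at hjoined
  refine hjoined.mono (image_subset_iff.2 fun z hz => ⟨mt hmem.2 hz.1, ?_⟩)
  rw [← hmid, mem_closedBall, e.dist_eq]
  exact hz.2

end EuclideanPlane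

section UnboundedComplement

lemma isPreconnected_compl_closedBall {E : Type*} [NormedAddCommGroup E] [NormedSpace ℝ E]
    (hE : 1 < Module.rank ℝ E) (c : E) {R : ℝ} (hR : 0 ≤ R) :
    IsPreconnected (closedBall c R)ᶜ := by
  have himage : (closedBall c R)ᶜ = (fun z : ℝ × E => c + z.1 • z.2) '' (Ioi R ×ˢ sphere 0 1) := by
    ext v
    rw [mem_compl_iff, mem_closedBall, not_le, dist_eq_norm]
    constructor
    · intro hv
      have hne : ‖v - c‖ ≠ 0 := (hR.trans_lt hv).ne'
      exact ⟨(‖v - c‖, ‖v - c‖⁻¹ • (v - c)),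
        ⟨hv, mem_sphere_zero_iff_norm.2 (norm_smul_inv_norm (𝕜 := ℝ) (norm_ne_zero_iff.1 hne))⟩,
        (congrArg (c + ·) (smul_inv_smul₀ hne _)).trans (add_sub_cancel c v)⟩
    · rintro ⟨⟨r, u⟩, ⟨hr, hu⟩, rfl⟩
      rw [add_sub_cancel_left, norm_smul, mem_sphere_zero_iff_norm.1 hu, mul_one]
      exact lt_of_lt_of_le hr (le_abs_self r)
  rw [himage]
  exact (isPreconnected_Ioi.prod (isPreconnected_sphere hE 0 1)).image _ (by fun_prop)

/-- The union of the unbounded connected components of the complement of `K`; when `K` is the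
boundary curve of a polygon, this is the exterior of the polygon. -/
def unboundedComplement {X : Type*} [TopologicalSpace X] [Bornology X] (K : Set X) : Set X :=
  {x ∈ Kᶜ | ¬ Bornology.IsBounded (connectedComponentIn Kᶜ x)}

section

variable {X : Type*} [TopologicalSpace X] [Bornology X] {K : Set X} {x : X}

lemma connectedComponentIn_subset_unboundedComplement (hx : x ∈ unboundedComplement K) :
    connectedComponentIn Kᶜ x ⊆ unboundedComplement K := fun _ hy =>
  ⟨connectedComponentIn_subset _ _ hy, connectedComponentIn_eq hy ▸ hx.2⟩

lemma isOpen_unboundedComplement [LocallyConnectedSpace X] (hK : IsClosed K) :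
    IsOpen (unboundedComplement K) :=
  isOpen_iff_mem_nhds.2 fun _ hx =>
    Filter.mem_of_superset
      (hK.isOpen_compl.connectedComponentIn.mem_nhds (mem_connectedComponentIn hx.1))
      (connectedComponentIn_subset_unboundedComplement hx)

end

lemma isPreconnected_unboundedComplement {E : Type*} [NormedAddCommGroup E] [NormedSpace ℝ E]
    (hE : 1 < Module.rank ℝ E) {K : Set E} (hK : Bornology.IsBounded K) :
    IsPreconnected (unboundedComplement K) := by
  obtain ⟨R, hR, hKR⟩ := hK.subset_closedBall_lt 0 0
  have hfar {x : E} (hx : x ∈ unboundedComplement K) :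
      (closedBall 0 R)ᶜ ⊆ connectedComponentIn Kᶜ x := by
    obtain ⟨z, hz, hzR⟩ := not_subset.1 fun h => hx.2 (isBounded_closedBall.subset h)
    rw [connectedComponentIn_eq hz]
    exact (isPreconnected_compl_closedBall hE 0 hR.le).subset_connectedComponentIn hzR
      (compl_subset_compl.2 hKR)
  refine isPreconnected_of_forall_pair fun x hx y hy => ?_
  obtain ⟨z, -, hzR⟩ := not_subset.1 fun h => hx.2 (isBounded_closedBall.subset h)
  exact ⟨_, union_subset (connectedComponentIn_subset_unboundedComplement hx)
    (connectedComponentIn_subset_unboundedComplement hy),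
    Or.inl (mem_connectedComponentIn hx.1), Or.inr (mem_connectedComponentIn hy.1),
    isPreconnected_connectedComponentIn.union z (hfar hx hzR) (hfar hy hzR)
      isPreconnected_connectedComponentIn⟩

end UnboundedComplement

namespace SimplePolygon

lemma isCompact_bdryCurve (P : SimplePolygon) : IsCompact P.bdryCurve :=
  isCompact_Icc.image P.continuous

lemma compl_region (P : SimplePolygon) : P.regionᶜ = unboundedComplement P.bdryCurve := by
  ext x
  simp only [region, unboundedComplement, mem_compl_iff, mem_union, mem_ofPred_eq]
  tauto

lemma isClosed_region (P : SimplePolygon) : IsClosed P.region := by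
  rw [← isOpen_compl_iff, P.compl_region]
  exact isOpen_unboundedComplement P.isCompact_bdryCurve.isClosed

lemma isPreconnected_compl_region (P : SimplePolygon) : IsPreconnected P.regionᶜ := by
  rw [P.compl_region]
  exact isPreconnected_unboundedComplement (Module.lt_rank_of_lt_finrank (by simp))
    P.isCompact_bdryCurve.isBounded

end SimplePolygon

lemma setOf_ball_subset_eq_compl_thickening {X : Type*} [PseudoMetricSpace X] (δ : ℝ) (W : Set X) :
    {z | ball z δ ⊆ W} = (thickening δ Wᶜ)ᶜ := by
  ext z
  rw [mem_compl_iff, mem_thickening_iff, ← not_iff_not, not_not, mem_ofPred_eq, not_subset]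
  simp only [mem_ball', mem_compl_iff, and_comm]

theorem blocking_path_exists_general {W S T : Set Plane} (hW : IsClosed W)
    (hWc : IsPreconnected Wᶜ) (hF : IsPreconnected {z | ball z 1 ⊆ W}) {x : Plane}
    (hx : ball x 1 ⊆ W) (hsep : ∀ y ∈ T, y ≠ x → 4 ≤ dist x y) {b : Set Plane}
    (hb : RemoteComponent {z | ball z 1 ⊆ W} S x b) :
    ∃ π : unitInterval → Plane, Continuous π ∧
      π 0 = x ∧ π 1 ∈ b ∧
      (∀ τ, ball (π τ) 1 ⊆ W) ∧
      (∀ τ, π τ ∈ ball x 2) ∧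
      ∀ y ∈ T, y ≠ x → ∀ b' : Set Plane, RemoteComponent {z | ball z 1 ⊆ W} S y b' →
        ∀ τ, π τ ∉ b' := by
  obtain ⟨⟨v, hv, rfl⟩, -⟩ := hb
  have hxv : dist x v < 2 := mem_ball'.1 hv.1.1
  have hball : closedBall (midpoint ℝ x v) (dist x v / 2) ⊆ ball x 2 :=
    closedBall_subset_ball' (by rw [dist_midpoint_left, Real.norm_two]; linarith)
  have hxF : x ∈ {z | ball z 1 ⊆ W} := hx
  have hvF := hv.1.2
  rw [setOf_ball_subset_eq_compl_thickening] at hF hxF hvF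
  obtain ⟨γ, hγ⟩ := joinedIn_compl_thickening finrank_euclideanSpace_fin hW.isOpen_compl hWc hF
    hxF hvF (by linarith)
  refine ⟨γ, γ.continuous, γ.source, γ.target.symm ▸ mem_connectedComponentIn hv, fun τ => ?_,
    fun τ => hball (hγ τ).2, ?_⟩
  · exact (setOf_ball_subset_eq_compl_thickening 1 W).ge (hγ τ).1
  · rintro y hy hyx _ ⟨⟨p, -, rfl⟩, -⟩ τ hτ
    exact (ball_disjoint_ball (by linarith [hsep y hy hyx])).notMem_of_mem_left
      (hball (hγ τ).2) (connectedComponentIn_subset _ _ hτ).1.1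

/-- For every blocker `x ∈ T` and every blocking area `b` of `x`, there is a path in the
free space from `x` to `b` staying inside `D₂(x)` and avoiding every blocking area of
every other blocker. -/
theorem blocking_path_exists (P : SimplePolygon) (S T : Set Plane)
    (hconn : IsConnected P.freeSpace)
    (hS : S ⊆ P.freeSpace) (hT : T ⊆ P.freeSpace)
    (hSfin : S.Finite) (hTfin : T.Finite)
    (hmonoS : ∀ s₁ ∈ S, ∀ s₂ ∈ S, s₁ ≠ s₂ → 4 ≤ dist s₁ s₂)
    (hmonoT : ∀ t₁ ∈ T, ∀ t₂ ∈ T, t₁ ≠ t₂ → 4 ≤ dist t₁ t₂)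
    (hbi : ∀ s ∈ S, ∀ t ∈ T, 2 ≤ dist s t)
    (x : Plane) (hx : x ∈ T) (b : Set Plane)
    (hb : BlockingArea P.freeSpace S x b) :
    ∃ π : unitInterval → Plane, Continuous π ∧
      π 0 = x ∧ π 1 ∈ b ∧
      (∀ τ, π τ ∈ P.freeSpace) ∧
      (∀ τ, π τ ∈ Metric.ball x 2) ∧
      ∀ y ∈ T, y ≠ x → ∀ b' : Set Plane, BlockingArea P.freeSpace S y b' →
        ∀ τ, π τ ∉ b' := by
  obtain ⟨π, hcont, h0, h1, hF, hball, havoid⟩ := blocking_path_exists_general P.isClosed_region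
    P.isPreconnected_compl_region hconn.isPreconnected (hT hx)
    (fun y hy hyx => hmonoT x hx y hy hyx.symm) hb.1
  exact ⟨π, hcont, h0, h1, hF, hball, fun y hy hyx b' hb' => havoid y hy hyx b' hb'.1⟩
end
end
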